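/- Let G be a unified chain graph (UCG) over a finite vertex set V and let p = N(0, Σ) be a Gaussian distribution on ℝ^V with Σ positive definite. Then the following are equivalent: p satisfies the global Markov property with respect to G; p satisfies the block-recursive Markov property with respect to G; p satisfies the local Markov property with respect to G; p satisfies the pairwise Markov property with respect to G. -/

import Mathlib

open Matrix MeasureTheory ProbabilityTheory

attribute [local instance] Classical.propDecidable

noncomputable section

variable {V : Type*}

/-- The submatrix of `S` with rows indexed by `X` and columns indexed by `Y`. -/
def msub (S : Matrix V V ℝ) (X Y : Finset V) : Matrix X Y ℝ :=
  Matrix.of fun i j => S i.1 j.1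

/-- Conditional independence `X ⊥ Y | Z` for a centered Gaussian distribution with
positive definite covariance matrix `S`:  `Σ_{X,Y} − Σ_{X,Z} (Σ_{Z,Z})⁻¹ Σ_{Z,Y} = 0`. -/
def gaussCI [Fintype V] [DecidableEq V] (S : Matrix V V ℝ) (X Y Z : Finset V) : Prop :=
  msub S X Y - msub S X Z * (msub S Z Z)⁻¹ * msub S Z Y = 0

/-- Pairwise disjointness of three sets. -/
def PDisj (X Y Z : Finset V) : Prop :=
  Disjoint X Y ∧ Disjoint X Z ∧ Disjoint Y Z

/-- Pairwise disjointness of four sets. -/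
def PDisj4 (X Y W Z : Finset V) : Prop :=
  Disjoint X Y ∧ Disjoint X W ∧ Disjoint X Z ∧ Disjoint Y W ∧ Disjoint Y Z ∧ Disjoint W Z

/-- A graph with three kinds of edges: undirected (`undir`), solid directed (`solid`,
written `A → B`) and dashed directed (`dashed`, written `A ⇢ B`).  No axioms are imposed. -/
structure PreGraph (V : Type*) where
  undir : V → V → Prop
  solid : V → V → Prop
  dashed : V → V → Prop

namespace PreGraph

variable (G : PreGraph V)

/-- There is an undirected edge between `a` and `b`. -/
def und (a b : V) : Prop := G.undir a b ∨ G.undir b a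

/-- `a` and `b` are adjacent. -/
def adj (a b : V) : Prop :=
  G.und a b ∨ G.solid a b ∨ G.solid b a ∨ G.dashed a b ∨ G.dashed b a

/-- The edge between `a` and `b` is undirected or directed (solid or dashed) from `a` to `b`. -/
def fwd (a b : V) : Prop := G.und a b ∨ G.solid a b ∨ G.dashed a b

/-- A route in `G`: a sequence of nodes `nodes 0, nodes 1, …, nodes len` such that
consecutive nodes are adjacent. -/
structure Route (G : PreGraph V) where
  len : ℕ
  nodes : ℕ → V
  adj_step : ∀ i < len, G.adj (nodes i) (nodes (i + 1))

/-- `c` is a collider node between `a` and `b`:  `a ⇢ c ⇠ b`, `a ⇢ c − b` (in either of the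
two traversal directions) or `a ⇢ c ← b` (in either of the two traversal directions). -/
def colliderTriple (a c b : V) : Prop :=
  (G.dashed a c ∧ G.dashed b c) ∨
  (G.dashed a c ∧ G.und c b) ∨ (G.und a c ∧ G.dashed b c) ∨
  (G.dashed a c ∧ G.solid b c) ∨ (G.solid a c ∧ G.dashed b c)

variable {G} in
/-- The node at position `k` of the route `ρ` is a collider node of `ρ`. -/
def Route.colliderNodeAt (ρ : G.Route) (k : ℕ) : Prop :=
  1 ≤ k ∧ k < ρ.len ∧ G.colliderTriple (ρ.nodes (k - 1)) (ρ.nodes k) (ρ.nodes (k + 1))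

variable {G} in
/-- The positions `p, …, q` of `ρ` form a collider section of `ρ`, i.e. a maximal undirected
subroute `C1 − ⋯ − Cn` of `ρ` such that `A → C1 − ⋯ − Cn ← B` is a subroute of `ρ`. -/
def Route.colliderSectionOcc (ρ : G.Route) (p q : ℕ) : Prop :=
  1 ≤ p ∧ p ≤ q ∧ q + 1 ≤ ρ.len ∧
  (∀ m, p ≤ m → m < q → G.und (ρ.nodes m) (ρ.nodes (m + 1))) ∧
  G.solid (ρ.nodes (p - 1)) (ρ.nodes p) ∧ G.solid (ρ.nodes (q + 1)) (ρ.nodes q)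

variable {G} in
/-- The node at position `k` of `ρ` lies in a collider section of `ρ`. -/
def Route.inColliderSectionAt (ρ : G.Route) (k : ℕ) : Prop :=
  ∃ p q, ρ.colliderSectionOcc p q ∧ p ≤ k ∧ k ≤ q

variable {G} in
/-- The route `ρ` is `Z`-open: (i) all collider nodes are in `Z`, (ii) every collider
section contains some node of `Z`, and (iii) every node which is neither a collider node
nor inside a collider section is outside `Z`. -/
def Route.IsZOpen (ρ : G.Route) (Z : Finset V) : Prop :=
  (∀ k, ρ.colliderNodeAt k → ρ.nodes k ∈ Z) ∧
  (∀ p q, ρ.colliderSectionOcc p q → ∃ m, p ≤ m ∧ m ≤ q ∧ ρ.nodes m ∈ Z) ∧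
  (∀ k ≤ ρ.len, ¬ ρ.colliderNodeAt k → ¬ ρ.inColliderSectionAt k → ρ.nodes k ∉ Z)

variable {G} in
/-- A pure collider route (with at least one edge): every intermediate node is a collider
node or lies in a collider section of the route. -/
def Route.IsPureCollider (ρ : G.Route) : Prop :=
  1 ≤ ρ.len ∧ ∀ k, 0 < k → k < ρ.len → ρ.colliderNodeAt k ∨ ρ.inColliderSectionAt k

/-- Separation `X ⊥_G Y | Z`: there is no `Z`-open route in `G` between a node of `X` and a
node of `Y`. -/
def Sep (X Y Z : Finset V) : Prop :=
  ¬ ∃ ρ : G.Route,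
      ((ρ.nodes 0 ∈ X ∧ ρ.nodes ρ.len ∈ Y) ∨ (ρ.nodes 0 ∈ Y ∧ ρ.nodes ρ.len ∈ X)) ∧
      ρ.IsZOpen Z

section Finite

variable [Fintype V] [DecidableEq V]

/-- The fathers of `X`: nodes `b` with `b → a` in `G` for some `a ∈ X`. -/
def fa (X : Finset V) : Finset V := Finset.univ.filter fun b => ∃ a ∈ X, G.solid b a

/-- The mothers of `X`: nodes `b` with `b ⇢ a` in `G` for some `a ∈ X`. -/
def mo (X : Finset V) : Finset V := Finset.univ.filter fun b => ∃ a ∈ X, G.dashed b a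

/-- The parents of `X`. -/
def pa (X : Finset V) : Finset V := G.fa X ∪ G.mo X

/-- The neighbors of `X`: nodes `b` with `b − a` in `G` for some `a ∈ X`. -/
def nb (X : Finset V) : Finset V := Finset.univ.filter fun b => ∃ a ∈ X, G.und b a

/-- There is a descending route from `a` to `b`: all edges undirected or directed in the
direction of travel, containing at least one directed edge. -/
def descends (a b : V) : Prop :=
  ∃ (n : ℕ) (f : ℕ → V), f 0 = a ∧ f n = b ∧ (∀ i < n, G.fwd (f i) (f (i + 1))) ∧
    ∃ i < n, G.solid (f i) (f (i + 1)) ∨ G.dashed (f i) (f (i + 1))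

/-- The non-descendants of `X`. -/
def nd (X : Finset V) : Finset V := Finset.univ.filter fun b => ¬ ∃ a ∈ X, G.descends a b

/-- Connectivity by undirected routes. -/
def uconn : V → V → Prop := Relation.ReflTransGen G.und

/-- The chain component containing `i`. -/
def cc (i : V) : Finset V := Finset.univ.filter fun j => G.uconn i j

/-- The set of chain components of `G`. -/
def ccs : Finset (Finset V) := Finset.univ.image G.cc

/-- The nodes incident to some edge of `G`. -/
def verts : Finset V := Finset.univ.filter fun a => ∃ b, G.adj a b

/-- `π` is a topological ordering of the chain components: it is constant on components and
increases along directed edges. -/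
def IsTopoOrder (π : V → ℕ) : Prop :=
  (∀ a b, G.uconn a b → π a = π b) ∧ ∀ a b, G.solid a b ∨ G.dashed a b → π a < π b

/-- Equation 1: for every topological ordering of the chain components, each component `K`
is independent of the preceding components minus `Pa(K)` given `Pa(K)`. -/
def eq1 (S : Matrix V V ℝ) : Prop :=
  ∀ π : V → ℕ, G.IsTopoOrder π → ∀ i : V,
    gaussCI S (G.cc i) ((Finset.univ.filter fun b => π b < π i) \ G.pa (G.cc i))
      (G.pa (G.cc i))

/-- The regression coefficients `β_K = Σ_{K,Pa(K)} (Σ_{Pa(K),Pa(K)})⁻¹`. -/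
def beta (S : Matrix V V ℝ) (K : Finset V) : Matrix K (G.pa K) ℝ :=
  msub S K (G.pa K) * (msub S (G.pa K) (G.pa K))⁻¹

/-- The conditional covariance matrix `Λ_K`. -/
def lam (S : Matrix V V ℝ) (K : Finset V) : Matrix K K ℝ :=
  msub S K K - msub S K (G.pa K) * (msub S (G.pa K) (G.pa K))⁻¹ * msub S (G.pa K) K

/-- The precision matrix `Ω = (Σ_{K ∪ Pa(K), K ∪ Pa(K)})⁻¹`. -/
def om (S : Matrix V V ℝ) (K : Finset V) : Matrix ↥(K ∪ G.pa K) ↥(K ∪ G.pa K) ℝ :=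
  (msub S (K ∪ G.pa K) (K ∪ G.pa K))⁻¹

/-- Equation 6: `(β_K)_{i,j} = 0` for all `i ∈ K` and `j ∈ Mo(K) ∖ Mo(i)`. -/
def eq6 (S : Matrix V V ℝ) : Prop :=
  ∀ K ∈ G.ccs, ∀ i (hi : i ∈ K), ∀ j (hj : j ∈ G.pa K),
    j ∈ G.mo K → j ∉ G.mo {i} → G.beta S K ⟨i, hi⟩ ⟨j, hj⟩ = 0

/-- Equation 7: `Ω_{i,j} = 0` for all `i ∈ K` and `j ∈ Fa(K) ∖ Fa(i)`. -/
def eq7 (S : Matrix V V ℝ) : Prop :=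
  ∀ K ∈ G.ccs, ∀ i (hi : i ∈ K), ∀ j (hj : j ∈ G.pa K),
    j ∈ G.fa K → j ∉ G.fa {i} →
    G.om S K ⟨i, Finset.mem_union_left _ hi⟩ ⟨j, Finset.mem_union_right _ hj⟩ = 0

/-- Equation 8: `(Λ_K⁻¹)_{i,j} = 0` for all `i ∈ K` and `j ∈ K ∖ ({i} ∪ Ne(i))`. -/
def eq8 (S : Matrix V V ℝ) : Prop :=
  ∀ K ∈ G.ccs, ∀ i (hi : i ∈ K), ∀ j (hj : j ∈ K),
    j ≠ i → j ∉ G.nb {i} → (G.lam S K)⁻¹ ⟨i, hi⟩ ⟨j, hj⟩ = 0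

/-- `p` satisfies Equation 1 and the zero restrictions of Equations 6–8 w.r.t. `G`. -/
def eqs (S : Matrix V V ℝ) : Prop := G.eq1 S ∧ G.eq6 S ∧ G.eq7 S ∧ G.eq8 S

/-- The global Markov property with respect to `G`, for an abstract ternary
(conditional-independence) relation `I`. -/
def globalMP (I : Finset V → Finset V → Finset V → Prop) : Prop :=
  ∀ X Y Z : Finset V, PDisj X Y Z → G.Sep X Y Z → I X Y Z

/-- The block-recursive Markov property (B1)–(B3) with respect to `G`. -/
def blockRecMP (I : Finset V → Finset V → Finset V → Prop) : Prop :=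
  ∀ K ∈ G.ccs, ∀ i ∈ K,
    I {i} (((G.nd K \ K) \ G.fa K) \ G.mo {i}) (G.fa K ∪ G.mo {i}) ∧
    I {i} (((G.nd K \ K) \ G.fa {i}) \ G.mo K) ((K \ {i}) ∪ G.fa {i} ∪ G.mo K) ∧
    ∀ j ∈ K, j ≠ i → j ∉ G.nb {i} → I {i} {j} ((K \ {i, j}) ∪ G.pa K)

/-- The pairwise Markov property (P1)–(P2) with respect to `G`. -/
def pairwiseMP (I : Finset V → Finset V → Finset V → Prop) : Prop :=
  ∀ i j : V, i ≠ j → ¬ G.adj i j → ∀ K ∈ G.ccs, i ∈ K →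
    (j ∈ ((G.nd {i} \ K) \ G.fa K) \ G.mo {i} → I {i} {j} ((G.nd {i} \ K) \ {j})) ∧
    (j ∈ ((G.nd {i} \ {i}) \ G.fa {i}) \ G.mo K → I {i} {j} (G.nd {i} \ {i, j}))

/-- The local Markov property (L1)–(L2) with respect to `G`. -/
def localMP (I : Finset V → Finset V → Finset V → Prop) : Prop :=
  ∀ K ∈ G.ccs, ∀ i ∈ K,
    I {i} (((G.nd {i} \ K) \ G.fa K) \ G.mo {i}) (G.fa K ∪ G.mo {i}) ∧
    I {i} ((((G.nd {i} \ {i}) \ G.pa {i}) \ G.nb {i}) \ G.mo (G.nb {i}))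
      (G.pa {i} ∪ G.nb {i} ∪ G.mo (G.nb {i}))

/-- The subgraph `G^U`: it keeps the edge `A ⊸ B` (with its type and orientation) iff `G`
has a route `A ⊸ B ⊸ ⋯ ⊸ C` with `C ∈ U`, all edges undirected or directed in the
direction of travel, and no subroute `R ⇢ S − T`. -/
def goodFrom (U : Finset V) (a b : V) : Prop :=
  ∃ (f : ℕ → V) (n : ℕ), 1 ≤ n ∧ f 0 = a ∧ f 1 = b ∧ f n ∈ U ∧
    (∀ i < n, G.fwd (f i) (f (i + 1))) ∧
    ∀ i, i + 2 ≤ n → ¬ (G.dashed (f i) (f (i + 1)) ∧ G.und (f (i + 1)) (f (i + 2)))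

/-- The graph `G^U`. -/
def derived (U : Finset V) : PreGraph V where
  undir a b := G.undir a b ∧ G.goodFrom U a b
  solid a b := G.solid a b ∧ G.goodFrom U a b
  dashed a b := G.dashed a b ∧ G.goodFrom U a b

/-- The set `Y'` used in Lemmas 2 and 3:
`Y' = {B' ∈ V(G^{X∪Y∪Z}) ∖ (X ∪ Z) : X ⊥_{G^{X∪Y∪Z}} B' | Z}`. -/
def derivedYp (X Y Z : Finset V) : Finset V :=
  ((G.derived (X ∪ Y ∪ Z)).verts \ (X ∪ Z)).filter fun b =>
    (G.derived (X ∪ Y ∪ Z)).Sep X {b} Z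

/-- The set `X' = V(G^{X∪Y∪Z}) ∖ (Y' ∪ Z)` used in Lemmas 2 and 3. -/
def derivedXp (X Y Z : Finset V) : Finset V :=
  (G.derived (X ∪ Y ∪ Z)).verts \ (G.derivedYp X Y Z ∪ Z)

end Finite

end PreGraph

/-- A chain graph: at most one edge between any pair of distinct nodes (undirected, solid
directed, or dashed directed) and no semidirected cycles. -/
structure ChainGraph (V : Type*) extends PreGraph V where
  undir_symm : ∀ a b, toPreGraph.undir a b → toPreGraph.undir b a
  undir_irrefl : ∀ a, ¬ toPreGraph.undir a a
  solid_irrefl : ∀ a, ¬ toPreGraph.solid a a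
  dashed_irrefl : ∀ a, ¬ toPreGraph.dashed a a
  undir_not_solid : ∀ a b, toPreGraph.undir a b → ¬ toPreGraph.solid a b
  undir_not_dashed : ∀ a b, toPreGraph.undir a b → ¬ toPreGraph.dashed a b
  solid_not_solid : ∀ a b, toPreGraph.solid a b → ¬ toPreGraph.solid b a
  solid_not_dashed : ∀ a b, toPreGraph.solid a b → ¬ toPreGraph.dashed a b
  solid_not_dashed_rev : ∀ a b, toPreGraph.solid a b → ¬ toPreGraph.dashed b a
  dashed_not_dashed : ∀ a b, toPreGraph.dashed a b → ¬ toPreGraph.dashed b a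
  no_semidirected_cycle : ¬ ∃ (f : ℕ → V) (n : ℕ), 1 ≤ n ∧ f n = f 0 ∧
    (toPreGraph.solid (f 0) (f 1) ∨ toPreGraph.dashed (f 0) (f 1)) ∧
    ∀ i < n, toPreGraph.fwd (f i) (f (i + 1))

namespace ChainGraph

variable (G : ChainGraph V)

/-- An LWF chain graph: no dashed directed edges. -/
def IsLWF : Prop := ∀ a b, ¬ G.toPreGraph.dashed a b

/-- An AMP chain graph: no solid directed edges. -/
def IsAMP : Prop := ∀ a b, ¬ G.toPreGraph.solid a b

/-- A unified chain graph: `Fa(K) ∩ Mo(K) = ∅` for every chain component `K`. -/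
def IsUCG [Fintype V] [DecidableEq V] : Prop :=
  ∀ K ∈ G.toPreGraph.ccs, Disjoint (G.toPreGraph.fa K) (G.toPreGraph.mo K)

end ChainGraph


/-- The AMP chain graph obtained from `G` by deleting every solid directed edge. -/
def ChainGraph.dropSolid (G : ChainGraph V) : ChainGraph V where
  undir := G.toPreGraph.undir
  solid _ _ := False
  dashed := G.toPreGraph.dashed
  undir_symm := G.undir_symm
  undir_irrefl := G.undir_irrefl
  solid_irrefl _ h := h
  dashed_irrefl := G.dashed_irrefl
  undir_not_solid _ _ _ h := h
  undir_not_dashed := G.undir_not_dashed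
  solid_not_solid _ _ h := h.elim
  solid_not_dashed _ _ h := h.elim
  solid_not_dashed_rev _ _ h := h.elim
  dashed_not_dashed := G.dashed_not_dashed
  no_semidirected_cycle := fun ⟨f, n, hn, hcyc, hstart, hsteps⟩ =>
    G.no_semidirected_cycle ⟨f, n, hn, hcyc, Or.inr (hstart.resolve_left id),
      fun i hi => (hsteps i hi).imp id (Or.imp False.elim id)⟩

/-- The restriction of `ω : V → ℝ` to the coordinates in `S`. -/
def marg (S : Finset V) : (V → ℝ) → (S → ℝ) := fun ω s => ω s.1

lemma marg_measurable (S : Finset V) : Measurable (marg (V := V) S) :=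
  measurable_pi_lambda _ fun s => measurable_pi_apply s.1

/-- Conditional independence of the coordinate tuples indexed by `X` and `Y` given the
coordinate tuple indexed by `Z`, for a distribution `μ` on `ℝ^V`. -/
def mCI [Fintype V] (μ : Measure (V → ℝ)) [IsFiniteMeasure μ] (X Y Z : Finset V) : Prop :=
  CondIndepFun (MeasurableSpace.comap (marg Z) inferInstance) ((marg_measurable Z).comap_le)
    (marg X) (marg Y) μ

/-- A probability distribution `μ` on `ℝ^V` satisfies the global Markov property with
respect to `G`. -/
def measGlobalMarkov [Fintype V] [DecidableEq V] (G : PreGraph V) (μ : Measure (V → ℝ))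
    [IsFiniteMeasure μ] : Prop :=
  ∀ X Y Z : Finset V, PDisj X Y Z → G.Sep X Y Z → mCI μ X Y Z

/-- A graphoid over `V`: a ternary relation on pairwise disjoint subsets of `V` satisfying
symmetry, decomposition, weak union, contraction and intersection. -/
structure Graphoid (V : Type*) [DecidableEq V] where
  rel : Finset V → Finset V → Finset V → Prop
  symmetry : ∀ X Y Z : Finset V, PDisj X Y Z → rel X Y Z → rel Y X Z
  decomposition : ∀ X Y W Z : Finset V, PDisj4 X Y W Z → rel X (Y ∪ W) Z → rel X Y Z
  weakUnion : ∀ X Y W Z : Finset V, PDisj4 X Y W Z → rel X (Y ∪ W) Z → rel X Y (Z ∪ W)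
  contraction : ∀ X Y W Z : Finset V, PDisj4 X Y W Z →
    rel X Y (Z ∪ W) → rel X W Z → rel X (Y ∪ W) Z
  intersection : ∀ X Y W Z : Finset V, PDisj4 X Y W Z →
    rel X Y (Z ∪ W) → rel X W (Z ∪ Y) → rel X (Y ∪ W) Z

/-- The conditional variance `Σ_{a,a|B} = Σ_{a,a} − Σ_{a,B} (Σ_{B,B})⁻¹ Σ_{B,a}`. -/
def condVar [Fintype V] [DecidableEq V] (S : Matrix V V ℝ) (a : V) (B : Finset V) : ℝ :=
  S a a - ∑ b₁ : B, ∑ b₂ : B, S a b₁.1 * (msub S B B)⁻¹ b₁ b₂ * S b₂.1 a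


/-!
Only two of the implications need more than the semigraphoid axioms: `global → local` is a graphical
argument about separation, and `pairwise → global` goes through systems of linear equations.

Regress every node on its nondescendants outside its chain component. The pairwise property forces
the coefficient matrix to be `B + L C`, where `L` is the error covariance matrix, and forces the
zero patterns of `B`, `C` and the error precision matrix `L⁻¹` to be those of the dashed, solid
and undirected edges. The ancestors of `X ∪ Y ∪ Z` keep their joint distribution when the
equations lose the dashed edges into other nodes and the solid edges into components without
ancestors. If `X` and `Y` are separated by `Z`, then in the precision matrix of the modified
system no entry links the set `R` of nodes outside `Z` reached from `X` by open routes to a node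
outside `R ∪ Z`, so `X ⊆ R` is independent of `Y` given `Z`.
-/

section GaussianCI

theorem msub_posDef {S : Matrix V V ℝ} (hS : S.PosDef) (D : Finset V) : (msub S D D).PosDef :=
  hS.submatrix Subtype.val_injective

variable [Fintype V] {S : Matrix V V ℝ}

theorem eq_zero_of_vecMul_eq_zero_on_support (hS : S.PosDef) {g : V → ℝ}
    (h : ∀ w, g w ≠ 0 → (g ᵥ* S) w = 0) : g = 0 := by
  by_contra hg
  have hpos := hS.dotProduct_mulVec_pos hg
  rw [star_trivial, dotProduct_mulVec] at hpos
  refine hpos.ne' (Finset.sum_eq_zero fun w _ => ?_)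
  by_cases hw : g w = 0
  · simp [hw]
  · simp [h w hw]

theorem eq_of_vecMul_eq_on (hS : S.PosDef) {D : Finset V} {c d : V → ℝ}
    (hc : ∀ v ∉ D, c v = 0) (hd : ∀ v ∉ D, d v = 0)
    (h : ∀ w ∈ D, (c ᵥ* S) w = (d ᵥ* S) w) : c = d := by
  refine sub_eq_zero.1 (eq_zero_of_vecMul_eq_zero_on_support hS fun w hw => ?_)
  have hwD : w ∈ D := by
    by_contra hn
    exact hw (by simp [hc w hn, hd w hn])
  rw [sub_vecMul, Pi.sub_apply, h w hwD, sub_self]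

theorem vecMul_eq_sum_coe {D : Finset V} {c : V → ℝ} (hc : ∀ v ∉ D, c v = 0)
    (S : Matrix V V ℝ) (w : V) : (c ᵥ* S) w = ∑ d : D, c d.1 * S d.1 w := by
  rw [Finset.sum_coe_sort D fun d => c d * S d w]
  refine (Finset.sum_subset (Finset.subset_univ D) fun v _ hv => ?_).symm
  simp [hc v hv]

theorem exists_vecMul_eq_on (hS : S.PosDef) (D : Finset V) (b : V → ℝ) :
    ∃ c : V → ℝ, (∀ v ∉ D, c v = 0) ∧ ∀ w ∈ D, (c ᵥ* S) w = b w := by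
  classical
  have hu := (Matrix.isUnit_iff_isUnit_det _).1 (msub_posDef hS D).isUnit
  let a : D → ℝ := (fun d : D => b d.1) ᵥ* (msub S D D)⁻¹
  let c : V → ℝ := fun v => if h : v ∈ D then a ⟨v, h⟩ else 0
  have hc : ∀ v ∉ D, c v = 0 := fun v hv => dif_neg hv
  refine ⟨c, hc, fun w hw => ?_⟩
  have ha : a ᵥ* msub S D D = fun d : D => b d.1 := by
    simp [a, vecMul_vecMul, Matrix.nonsing_inv_mul _ hu]
  rw [vecMul_eq_sum_coe hc]
  simpa [c, vecMul, dotProduct, msub] using congrFun ha ⟨w, hw⟩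

variable [DecidableEq V]

theorem msub_mul_inv_mul_msub_apply (hS : S.PosDef) {X Y Z : Finset V} (x : X) (y : Y)
    {c : V → ℝ} (hc : ∀ v ∉ Z, c v = 0) (hcZ : ∀ w ∈ Z, (c ᵥ* S) w = S x w) :
    (msub S X Z * (msub S Z Z)⁻¹ * msub S Z Y) x y = (c ᵥ* S) y := by
  have hu := (Matrix.isUnit_iff_isUnit_det _).1 (msub_posDef hS Z).isUnit
  have normal_equations : (fun z : Z => c z.1) ᵥ* msub S Z Z = msub S X Z x := by
    funext w
    have hw := hcZ w.1 w.2
    rw [vecMul_eq_sum_coe hc] at hw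
    simpa [vecMul, dotProduct, msub] using hw
  have coefficients : (msub S X Z * (msub S Z Z)⁻¹) x = fun z : Z => c z.1 := by
    rw [Matrix.mul_apply_eq_vecMul, ← normal_equations, vecMul_vecMul,
      Matrix.mul_nonsing_inv _ hu, vecMul_one]
  rw [Matrix.mul_apply_eq_vecMul, coefficients, vecMul_eq_sum_coe hc]
  simp [vecMul, dotProduct, msub]

/-- The vector `c` holds the coefficients of the regression of `x` on `Z`, and the condition on
`c ᵥ* S` says that the residual is uncorrelated with `Z ∪ Y`. -/
theorem gaussCI_iff_exists_regression (hS : S.PosDef) {X Y Z : Finset V} :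
    gaussCI S X Y Z ↔ ∀ x ∈ X, ∃ c : V → ℝ,
      (∀ v ∉ Z, c v = 0) ∧ ∀ w ∈ Z ∪ Y, (c ᵥ* S) w = S x w := by
  constructor
  · intro h x hx
    obtain ⟨c, hc, hcZ⟩ := exists_vecMul_eq_on hS Z (S x)
    refine ⟨c, hc, fun w hw => (Finset.mem_union.1 hw).elim (hcZ w) fun hwY => ?_⟩
    have hxw := congrFun (congrFun h ⟨x, hx⟩) ⟨w, hwY⟩
    rw [Matrix.sub_apply, Matrix.zero_apply, msub_mul_inv_mul_msub_apply hS _ _ hc hcZ] at hxw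
    exact (sub_eq_zero.1 hxw).symm
  · intro h
    ext x y
    obtain ⟨c, hc, hcZY⟩ := h x.1 x.2
    rw [Matrix.sub_apply, msub_mul_inv_mul_msub_apply hS x y hc
      fun w hw => hcZY w (Finset.mem_union_left _ hw), hcZY y (Finset.mem_union_right _ y.2)]
    exact sub_self _

/-- The semigraphoid axioms other than symmetry for a ternary relation `I`. The arguments need not
be disjoint; `weakUnion` includes decomposition. -/
structure IsLeftSemigraphoid (I : Finset V → Finset V → Finset V → Prop) : Prop where
  weakUnion : ∀ {X Y Z Y' Z' : Finset V},
    I X Y Z → Z ⊆ Z' → Z' ⊆ Z ∪ Y → Y' ⊆ Z ∪ Y → I X Y' Z'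
  contraction : ∀ {X Y W Z Z' : Finset V},
    I X Y Z' → I X W Z → Z ⊆ Z' → Z' ⊆ Z ∪ W → I X (Y ∪ W) Z

theorem isLeftSemigraphoid_gaussCI (hS : S.PosDef) : IsLeftSemigraphoid (gaussCI S) where
  weakUnion {X Y Z Y' Z'} h hZ hZ' hY' := by
    rw [gaussCI_iff_exists_regression hS] at h ⊢
    intro x hx
    obtain ⟨c, hc, hcY⟩ := h x hx
    exact ⟨c, fun v hv => hc v fun hvZ => hv (hZ hvZ),
      fun w hw => hcY w (Finset.union_subset hZ' hY' hw)⟩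
  contraction {X Y W Z Z'} hY hW hZ hZ' := by
    rw [gaussCI_iff_exists_regression hS] at hY hW ⊢
    intro x hx
    obtain ⟨c, hc, hcY⟩ := hY x hx
    obtain ⟨d, hd, hdW⟩ := hW x hx
    obtain rfl : c = d := eq_of_vecMul_eq_on hS hc (fun v hv => hd v fun hvZ => hv (hZ hvZ))
      fun w hw => (hcY w (Finset.mem_union_left _ hw)).trans (hdW w (hZ' hw)).symm
    refine ⟨c, hd, fun w hw => ?_⟩
    rw [← Finset.union_assoc, Finset.union_right_comm, Finset.mem_union] at hw
    exact hw.elim (hdW w) fun hwY => hcY w (Finset.mem_union_right _ hwY)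

theorem gaussCI_congr {S' : Matrix V V ℝ} {X Y Z W : Finset V} (hX : X ⊆ W) (hY : Y ⊆ W)
    (hZ : Z ⊆ W) (h : ∀ v ∈ W, ∀ w ∈ W, S v w = S' v w) :
    gaussCI S X Y Z ↔ gaussCI S' X Y Z := by
  have hm : ∀ A B : Finset V, A ⊆ W → B ⊆ W → msub S A B = msub S' A B := fun A B hA hB => by
    ext a b
    exact h _ (hA a.2) _ (hB b.2)
  rw [gaussCI, gaussCI, hm _ _ hX hY, hm _ _ hX hZ, hm _ _ hZ hZ, hm _ _ hZ hY]

theorem gaussCI_of_precision_block {J : Matrix V V ℝ} (hS : S.PosDef) (hJS : J * S = 1)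
    {X Y Z R : Finset V} (hX : X ⊆ R) (hY : Disjoint R Y) (hZ : Disjoint R Z)
    (hJ : ∀ v ∈ R, ∀ w ∉ R, w ∉ Z → J v w = 0) : gaussCI S X Y Z := by
  have hJpos : J.PosDef := Matrix.inv_eq_left_inv hJS ▸ hS.inv
  rw [gaussCI_iff_exists_regression hS]
  intro x hx
  obtain ⟨a, ha, haR⟩ := exists_vecMul_eq_on hJpos R (Pi.single x 1)
  refine ⟨Pi.single x 1 - a ᵥ* J, fun v hv => ?_, fun w hw => ?_⟩
  · by_cases hvR : v ∈ R
    · rw [Pi.sub_apply, haR v hvR, sub_self]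
    · have hvx : v ≠ x := fun h => hvR (h ▸ hX hx)
      rw [Pi.sub_apply, Pi.single_eq_of_ne hvx, zero_sub, neg_eq_zero]
      refine Finset.sum_eq_zero fun u _ => ?_
      by_cases hu : u ∈ R
      · simp [hJ u hu v hvR hv]
      · simp [ha u hu]
  · have hwR : w ∉ R := (Finset.mem_union.1 hw).elim
      (fun h hR => Finset.disjoint_left.1 hZ hR h) fun h hR => Finset.disjoint_left.1 hY hR h
    rw [sub_vecMul, vecMul_vecMul, hJS, vecMul_one, Pi.sub_apply, ha w hwR, sub_zero,
      single_one_vecMul, row_apply]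

theorem regression_eq_zero_of_gaussCI (hS : S.PosDef) {D : Finset V} {b : V → ℝ} {i j : V}
    (hb : ∀ v ∉ D, b v = 0) (hbS : ∀ w ∈ D, (b ᵥ* S) w = S i w)
    (h : gaussCI S {i} {j} (D \ {j})) : b j = 0 := by
  obtain ⟨c, hc, hcS⟩ := (gaussCI_iff_exists_regression hS).1 h i (Finset.mem_singleton_self i)
  have hcD : ∀ w ∈ D, (c ᵥ* S) w = S i w := fun w hw => hcS w (by simp [hw])
  rw [eq_of_vecMul_eq_on hS hb (fun v hv => hc v (by simp [hv]))
    fun w hw => (hbS w hw).trans (hcD w hw).symm]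
  exact hc j (by simp)

-- Both `q` and the residual of the regression of `i` on `D \ {i, j}` are uncorrelated with
-- `D \ {i}`, so they are proportional, and the residual has no `j`-coordinate.
theorem precision_eq_zero_of_gaussCI (hS : S.PosDef) {D : Finset V} {q : V → ℝ} {i j : V}
    (hij : i ≠ j) (hi : i ∈ D) (hq : ∀ v ∉ D, q v = 0)
    (hqS : ∀ w ∈ D, (q ᵥ* S) w = (1 : Matrix V V ℝ) i w)
    (h : gaussCI S {i} {j} (D \ {i, j})) : q j = 0 := by
  obtain ⟨c, hc, hcS⟩ := (gaussCI_iff_exists_regression hS).1 h i (Finset.mem_singleton_self i)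
  set g : V → ℝ := Pi.single i 1 - c with hg
  have hgi : g i = 1 := by simp [hg, hc i]
  have hgj : g j = 0 := by simp [hg, hc j, hij.symm]
  have hgD : ∀ v ∉ D, g v = 0 := fun v hv => by
    simp [hg, hc v (by simp [hv]), ne_of_mem_of_not_mem hi hv]
  have hgS : ∀ w ∈ D, (g ᵥ* S) w = (((g ᵥ* S) i • q) ᵥ* S) w := fun w hw => by
    rw [smul_vecMul, Pi.smul_apply, hqS w hw]
    obtain rfl | hiw := eq_or_ne i w
    · simp
    · have hcw : (c ᵥ* S) w = S i w := hcS w (by simp [hw, hiw.symm, Decidable.em])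
      simp [hg, sub_vecMul, hcw, Matrix.one_apply_ne hiw]
  have hgq : g = (g ᵥ* S) i • q :=
    eq_of_vecMul_eq_on hS hgD (fun v hv => by simp [hq v hv]) hgS
  have hne : (g ᵥ* S) i ≠ 0 := fun h0 => by
    rw [h0, zero_smul] at hgq
    simp [hgq] at hgi
  have hj := congrFun hgq j
  rw [hgj, Pi.smul_apply, smul_eq_mul] at hj
  exact (mul_eq_zero.1 hj.symm).resolve_left hne

end GaussianCI

section ZeroPattern

variable [Fintype V] {R : Type*}

theorem mul_of_ite_of_block [NonUnitalNonAssocSemiring R] {L W : Matrix V V R}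
    {p : V → V → Prop} [∀ i j, Decidable (p i j)]
    (h : ∀ i j k, L i k ≠ 0 → (p i j ↔ p k j)) :
    L * Matrix.of (fun i j => if p i j then W i j else 0) =
      Matrix.of fun i j => if p i j then (L * W) i j else 0 := by
  ext i j
  have hterm : ∀ k, L i k * (if p k j then W k j else 0) = if p i j then L i k * W k j else 0 :=
    fun k => by
      by_cases hik : L i k = 0
      · rw [hik, zero_mul, zero_mul, ite_self]
      · simp only [h i j k hik, mul_ite, mul_zero]
  simp only [Matrix.mul_apply, Matrix.of_apply, hterm]
  split_ifs
  exacts [rfl, Finset.sum_const_zero]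

variable [DecidableEq V]

theorem isUnit_det_one_sub_of_wellFounded [Field R] {A : Matrix V V R} {r : V → V → Prop}
    (hr : WellFounded r) (hA : ∀ i j, A i j ≠ 0 → r i j) : IsUnit (1 - A).det := by
  rw [isUnit_iff_ne_zero]
  intro hdet
  obtain ⟨a, ha, hmul⟩ := Matrix.exists_vecMul_eq_zero_iff.2 hdet
  obtain ⟨i, hi, hmin⟩ := hr.has_min {i | a i ≠ 0} (Function.ne_iff.1 ha)
  have hi_eq : a i = (a ᵥ* A) i := by
    have h := congrFun hmul i
    rwa [vecMul_sub, vecMul_one, Pi.sub_apply, Pi.zero_apply, sub_eq_zero] at h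
  refine hi (hi_eq.trans (Finset.sum_eq_zero fun j _ => ?_))
  by_contra hne
  exact hmin j (left_ne_zero_of_mul hne) (hA j i (right_ne_zero_of_mul hne))

theorem apply_eq_zero_of_mul_eq_one_of_block [CommRing R] {P L : Matrix V V R}
    {r : V → V → Prop} (hr : Equivalence r) (hPL : P * L = 1) (hL : ∀ i j, ¬ r i j → L i j = 0)
    {i j : V} (hij : ¬ r i j) : P i j = 0 := by
  let D : Matrix V V R := Matrix.diagonal fun k => if r i k then 1 else 0
  have hDL : D * L = L * D := by
    ext k l
    rw [Matrix.diagonal_mul, Matrix.mul_diagonal]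
    by_cases hkl : r k l
    · rw [show r i k ↔ r i l from ⟨(hr.trans · hkl), (hr.trans · (hr.symm hkl))⟩, mul_comm]
    · simp [hL k l hkl]
  have hPD : P * D = D * P := calc
    P * D = P * (D * L) * P := by
      rw [Matrix.mul_assoc, Matrix.mul_assoc, mul_eq_one_comm.1 hPL, Matrix.mul_one]
    _ = D * P := by rw [hDL, ← Matrix.mul_assoc, hPL, Matrix.one_mul]
  have hPDij := congrFun (congrFun hPD i) j
  rw [Matrix.mul_diagonal, Matrix.diagonal_mul, if_neg hij, if_pos (hr.refl i)] at hPDij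
  simpa using hPDij.symm

end ZeroPattern

theorem exists_seq_of_reflTransGen {α : Type*} {r : α → α → Prop} {a b : α}
    (h : Relation.ReflTransGen r a b) :
    ∃ (n : ℕ) (f : ℕ → α), f 0 = a ∧ f n = b ∧ ∀ i < n, r (f i) (f (i + 1)) := by
  induction h using Relation.ReflTransGen.head_induction_on with
  | refl => exact ⟨0, fun _ => b, rfl, rfl, fun i hi => absurd hi (Nat.not_lt_zero i)⟩
  | @head a c hac _ ih =>
    obtain ⟨n, f, rfl, hn, hf⟩ := ih
    refine ⟨n + 1, fun i => Nat.casesOn i a f, rfl, hn, fun i hi => ?_⟩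
    cases i with
    | zero => exact hac
    | succ i => exact hf i (by omega)

theorem reflTransGen_of_seq {α : Type*} {r : α → α → Prop} {f : ℕ → α} {m n : ℕ} (hmn : m ≤ n)
    (hf : ∀ i, m ≤ i → i < n → r (f i) (f (i + 1))) :
    Relation.ReflTransGen r (f m) (f n) :=
  (reflTransGen_of_succ_of_le (fun i j => r (f i) (f j)) (fun i hi => hf i hi.1 hi.2) hmn).lift f
    fun _ _ => id

namespace PreGraph

/-- There is a directed edge, solid or dashed, from `a` to `b`. -/
abbrev Directed (G : PreGraph V) (a b : V) : Prop := G.solid a b ∨ G.dashed a b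

/-- There is a route from `a` to `b`, possibly of length `0`, whose edges are undirected or directed
in the direction of travel. -/
abbrev Reach (G : PreGraph V) : V → V → Prop := Relation.ReflTransGen G.fwd

variable {G : PreGraph V} {a b c i j k : V}

theorem und_comm : G.und a b ↔ G.und b a := or_comm

theorem uconn_symm (h : G.uconn a b) : G.uconn b a :=
  (@Relation.ReflTransGen.stdSymm _ _ ⟨fun _ _ => und_comm.1⟩).symm _ _ h

theorem uconn_equivalence : Equivalence G.uconn :=
  ⟨fun _ => .refl, uconn_symm, Relation.ReflTransGen.trans⟩

theorem Reach.of_uconn (h : G.uconn a b) : G.Reach a b :=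
  Relation.ReflTransGen.mono (fun _ _ => Or.inl) _ _ h

theorem descends_iff :
    G.descends a b ↔ ∃ c d, G.Reach a c ∧ G.Directed c d ∧ G.Reach d b := by
  constructor
  · rintro ⟨n, f, rfl, rfl, hf, i, hi, hd⟩
    exact ⟨f i, f (i + 1), reflTransGen_of_seq (Nat.zero_le _) fun j _ hj => hf j (by omega), hd,
      reflTransGen_of_seq hi fun j _ hj => hf j hj⟩
  · rintro ⟨c, d, hac, hcd, hdb⟩
    induction hac using Relation.ReflTransGen.head_induction_on with
    | refl =>
      obtain ⟨n, f, rfl, rfl, hf⟩ := exists_seq_of_reflTransGen hdb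
      refine ⟨n + 1, fun i => Nat.casesOn i c f, rfl, rfl, ?_, 0, n.succ_pos, hcd⟩
      rintro (_ | i) hi
      exacts [Or.inr hcd, hf i (by omega)]
    | @head a _ hax _ ih =>
      obtain ⟨n, f, rfl, rfl, hf, i, hi, hd⟩ := ih
      refine ⟨n + 1, fun i => Nat.casesOn i a f, rfl, rfl, ?_, i + 1, Nat.succ_lt_succ hi, hd⟩
      rintro (_ | i) hi
      exacts [hax, hf i (by omega)]

theorem Directed.descends (h : G.Directed a b) : G.descends a b :=
  descends_iff.2 ⟨a, b, .refl, h, .refl⟩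

theorem descends.reach_right (h : G.descends a b) (hbc : G.Reach b c) : G.descends a c := by
  obtain ⟨x, y, hx, hxy, hy⟩ := descends_iff.1 h
  exact descends_iff.2 ⟨x, y, hx, hxy, hy.trans hbc⟩

theorem descends.reach_left (h : G.descends b c) (hab : G.Reach a b) : G.descends a c := by
  obtain ⟨x, y, hx, hxy, hy⟩ := descends_iff.1 h
  exact descends_iff.2 ⟨x, y, hab.trans hx, hxy, hy⟩

theorem descends.reach (h : G.descends a b) : G.Reach a b := by
  obtain ⟨x, y, hx, hxy, hy⟩ := descends_iff.1 h
  exact (hx.tail (Or.inr hxy)).trans hy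

section Finite

variable [Fintype V] {X : Finset V}

theorem mem_fa : b ∈ G.fa X ↔ ∃ a ∈ X, G.solid b a := by simp [fa]

theorem mem_mo : b ∈ G.mo X ↔ ∃ a ∈ X, G.dashed b a := by simp [mo]

theorem mem_nd : b ∈ G.nd X ↔ ∀ a ∈ X, ¬ G.descends a b := by simp [nd]

theorem mem_fa_singleton : b ∈ G.fa {a} ↔ G.solid b a := by simp [fa]

theorem mem_mo_singleton : b ∈ G.mo {a} ↔ G.dashed b a := by simp [mo]

theorem mem_nb_singleton : b ∈ G.nb {a} ↔ G.und b a := by simp [nb]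

theorem mem_nd_singleton : b ∈ G.nd {a} ↔ ¬ G.descends a b := by simp [nd]

theorem mem_cc : j ∈ G.cc i ↔ G.uconn i j := by simp [cc]

theorem self_mem_cc (i : V) : i ∈ G.cc i := mem_cc.2 .refl

theorem cc_eq_of_uconn (h : G.uconn i j) : G.cc i = G.cc j := by
  ext k
  rw [mem_cc, mem_cc]
  exact ⟨(uconn_symm h).trans, h.trans⟩

theorem nd_cc (i : V) : G.nd (G.cc i) = G.nd {i} := by
  ext b
  rw [mem_nd, mem_nd_singleton]
  exact ⟨fun h => h i (self_mem_cc i), fun h a ha hab =>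
    h (hab.reach_left (.of_uconn (mem_cc.1 ha)))⟩

theorem fa_mono {Y : Finset V} (h : X ⊆ Y) : G.fa X ⊆ G.fa Y := fun _ hb => by
  obtain ⟨a, ha, hba⟩ := mem_fa.1 hb
  exact mem_fa.2 ⟨a, h ha, hba⟩

theorem mo_mono {Y : Finset V} (h : X ⊆ Y) : G.mo X ⊆ G.mo Y := fun _ hb => by
  obtain ⟨a, ha, hba⟩ := mem_mo.1 hb
  exact mem_mo.2 ⟨a, h ha, hba⟩

theorem nd_eq_of_uconn (h : G.uconn i j) : G.nd {i} = G.nd {j} := by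
  rw [← nd_cc, cc_eq_of_uconn h, nd_cc]

variable [DecidableEq V]

theorem mem_pa : b ∈ G.pa X ↔ ∃ a ∈ X, G.Directed b a := by
  simp only [pa, Finset.mem_union, mem_fa, mem_mo, ← exists_or, ← and_or_left]

theorem mem_pa_singleton : b ∈ G.pa {a} ↔ G.Directed b a := by simp [mem_pa]

theorem cc_mem_ccs (i : V) : G.cc i ∈ G.ccs := Finset.mem_image_of_mem _ (Finset.mem_univ i)

theorem eq_cc_of_mem_ccs {K : Finset V} (hK : K ∈ G.ccs) (hi : i ∈ K) : K = G.cc i := by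
  obtain ⟨k, -, rfl⟩ := Finset.mem_image.1 hK
  exact cc_eq_of_uconn (mem_cc.1 hi)

end Finite

end PreGraph

namespace ChainGraph

open PreGraph

variable (G : ChainGraph V) {a b c : V}

theorem not_directed_of_und (h : G.und a b) :
    ¬ G.solid a b ∧ ¬ G.solid b a ∧ ¬ G.dashed a b ∧ ¬ G.dashed b a := by
  have hab : G.undir a b := h.elim id (G.undir_symm b a)
  have hba : G.undir b a := G.undir_symm a b hab
  exact ⟨G.undir_not_solid _ _ hab, G.undir_not_solid _ _ hba, G.undir_not_dashed _ _ hab,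
    G.undir_not_dashed _ _ hba⟩

theorem not_of_solid (h : G.solid a b) :
    ¬ G.und a b ∧ ¬ G.und b a ∧ ¬ G.solid b a ∧ ¬ G.dashed a b ∧ ¬ G.dashed b a :=
  ⟨fun hu => (G.not_directed_of_und hu).1 h, fun hu => (G.not_directed_of_und hu).2.1 h,
    G.solid_not_solid _ _ h, G.solid_not_dashed _ _ h, G.solid_not_dashed_rev _ _ h⟩

theorem not_of_dashed (h : G.dashed a b) :
    ¬ G.und a b ∧ ¬ G.und b a ∧ ¬ G.dashed b a ∧ ¬ G.solid a b ∧ ¬ G.solid b a :=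
  ⟨fun hu => (G.not_directed_of_und hu).2.2.1 h, fun hu => (G.not_directed_of_und hu).2.2.2 h,
    G.dashed_not_dashed _ _ h, fun hs => G.solid_not_dashed _ _ hs h,
    fun hs => G.solid_not_dashed_rev _ _ hs h⟩

theorem not_reach_of_directed (h : G.Directed a b) : ¬ G.Reach b a := by
  intro hba
  obtain ⟨n, f, rfl, hn, hf⟩ := exists_seq_of_reflTransGen hba
  refine G.no_semidirected_cycle ⟨fun i => Nat.casesOn i a f, n + 1, n.succ_pos, hn, h, ?_⟩
  rintro (_ | i) hi
  exacts [Or.inr h, hf i (by omega)]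

theorem not_fwd_of_directed (h : G.Directed a b) : ¬ G.fwd b a := fun hba =>
  G.not_reach_of_directed h (.single hba)

theorem not_reach_of_descends (h : G.descends a b) : ¬ G.Reach b a := by
  intro hba
  obtain ⟨x, y, hx, hxy, hy⟩ := descends_iff.1 h
  exact G.not_reach_of_directed hxy ((hy.trans hba).trans hx)

theorem not_descends_of_uconn (h : G.uconn a b) : ¬ G.descends a b := fun hab =>
  G.not_reach_of_descends hab (.of_uconn (uconn_symm h))

theorem not_descends_of_directed (h : G.Directed a b) (hbc : G.uconn b c) : ¬ G.descends c a :=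
  fun hca => G.not_reach_of_directed h ((Reach.of_uconn hbc).trans hca.reach)

theorem not_uconn_of_directed (h : G.Directed a b) (hbc : G.uconn b c) : ¬ G.uconn c a :=
  fun hca => G.not_reach_of_directed h (Reach.of_uconn (hbc.trans hca))

section Finite

variable [Fintype V]

theorem cc_subset_nd (i : V) : G.cc i ⊆ G.nd {i} := fun _ hj =>
  mem_nd_singleton.2 (G.not_descends_of_uconn (mem_cc.1 hj))

variable [DecidableEq V]

theorem pa_cc_subset (i : V) : G.pa (G.cc i) ⊆ G.nd {i} \ G.cc i := fun j hj => by
  obtain ⟨k, hk, hjk⟩ := mem_pa.1 hj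
  have hki := uconn_symm (mem_cc.1 hk)
  rw [Finset.mem_sdiff, mem_nd_singleton, mem_cc]
  exact ⟨G.not_descends_of_directed hjk hki, G.not_uconn_of_directed hjk hki⟩

theorem fa_cc_subset (i : V) : G.fa (G.cc i) ⊆ G.nd {i} \ G.cc i :=
  Finset.subset_union_left.trans (G.pa_cc_subset i)

theorem mo_cc_subset (i : V) : G.mo (G.cc i) ⊆ G.nd {i} \ G.cc i :=
  Finset.subset_union_right.trans (G.pa_cc_subset i)

theorem nb_subset_cc (i : V) : G.nb {i} ⊆ G.cc i \ {i} := fun j hj => by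
  rw [mem_nb_singleton] at hj
  rw [Finset.mem_sdiff, mem_cc, Finset.mem_singleton]
  refine ⟨.single (und_comm.1 hj), ?_⟩
  rintro rfl
  exact hj.elim (G.undir_irrefl j) (G.undir_irrefl j)

/-- The conditioning set of the local Markov property (L2): the parents and neighbors of `i`,
together with the mothers of the neighbors. -/
def boundary (i : V) : Finset V := G.pa {i} ∪ G.nb {i} ∪ G.mo (G.nb {i})

theorem boundary_subset (i : V) :
    G.boundary i ⊆ G.fa {i} ∪ G.mo (G.cc i) ∪ (G.cc i \ {i} ∩ G.nb {i}) := by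
  have hself : {i} ⊆ G.cc i := Finset.singleton_subset_iff.2 (self_mem_cc i)
  have hnb := G.nb_subset_cc i
  have hmo : G.mo {i} ⊆ G.mo (G.cc i) := mo_mono hself
  have hmonb : G.mo (G.nb {i}) ⊆ G.mo (G.cc i) := mo_mono (hnb.trans Finset.sdiff_subset)
  rw [boundary, pa]
  grind

theorem boundary_subset_nd (i : V) : G.boundary i ⊆ G.nd {i} \ {i} := by
  have hself := self_mem_cc (G := G.toPreGraph) i
  have hfa : G.fa {i} ⊆ G.fa (G.cc i) := fa_mono (Finset.singleton_subset_iff.2 hself)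
  have hbd := G.boundary_subset i
  have hcc := G.cc_subset_nd i
  have hfaK := G.fa_cc_subset i
  have hmoK := G.mo_cc_subset i
  grind

end Finite

end ChainGraph

namespace PreGraph

variable {G : PreGraph V} {a b c : V} {X Y Z : Finset V}

theorem colliderTriple_comm : G.colliderTriple a c b ↔ G.colliderTriple b c a := by
  unfold colliderTriple
  rw [und_comm (a := a), und_comm (a := c)]
  tauto

theorem colliderTriple.fwd_left (h : G.colliderTriple a c b) : G.fwd a c := by
  unfold colliderTriple at h
  unfold fwd
  tauto

theorem adj_iff : G.adj a b ↔ G.und a b ∨ G.Directed a b ∨ G.Directed b a := by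
  unfold adj
  tauto

namespace Route

variable {ρ : G.Route} {k l m p q : ℕ}

/-- The route traversed backwards. -/
def reverse (ρ : G.Route) : G.Route where
  len := ρ.len
  nodes k := ρ.nodes (ρ.len - k)
  adj_step k hk := by
    have h := ρ.adj_step (ρ.len - (k + 1)) (by omega)
    rw [show ρ.len - (k + 1) + 1 = ρ.len - k by omega] at h
    rw [adj_iff] at h ⊢
    rwa [und_comm, or_comm (a := G.Directed _ _)]

theorem reverse_reverse_nodes (hk : k ≤ ρ.len) : ρ.reverse.reverse.nodes k = ρ.nodes k := by
  change ρ.nodes (ρ.len - (ρ.len - k)) = ρ.nodes k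
  rw [Nat.sub_sub_self hk]

theorem colliderNodeAt_reverse (hk : k ≤ ρ.len) :
    ρ.reverse.colliderNodeAt k ↔ ρ.colliderNodeAt (ρ.len - k) := by
  unfold colliderNodeAt
  change (1 ≤ k ∧ k < ρ.len ∧ G.colliderTriple (ρ.nodes (ρ.len - (k - 1))) (ρ.nodes (ρ.len - k))
    (ρ.nodes (ρ.len - (k + 1)))) ↔ _
  rw [colliderTriple_comm, ← and_assoc, ← and_assoc,
    show (1 ≤ k ∧ k < ρ.len) ↔ (1 ≤ ρ.len - k ∧ ρ.len - k < ρ.len) by omega, and_congr_right_iff]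
  intro h
  rw [show ρ.len - (k - 1) = ρ.len - k + 1 by omega, Nat.sub_sub]

theorem colliderSectionOcc.of_reverse (h : ρ.reverse.colliderSectionOcc p q) :
    ρ.colliderSectionOcc (ρ.len - q) (ρ.len - p) := by
  obtain ⟨hp, hpq, hq, hund, hin, hout⟩ := h
  change q + 1 ≤ ρ.len at hq
  change ∀ m, p ≤ m → m < q → G.und (ρ.nodes (ρ.len - m)) (ρ.nodes (ρ.len - (m + 1))) at hund
  refine ⟨by omega, by omega, by omega, fun m hm hmq => ?_, ?_, ?_⟩
  · have := hund (ρ.len - (m + 1)) (by omega) (by omega)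
    rw [und_comm]
    rwa [show ρ.len - (ρ.len - (m + 1)) = m + 1 by omega,
      show ρ.len - (ρ.len - (m + 1) + 1) = m by omega] at this
  · rw [Nat.sub_sub]
    exact hout
  · rw [show ρ.len - p + 1 = ρ.len - (p - 1) by omega]
    exact hin

theorem colliderSectionOcc.reverse (h : ρ.colliderSectionOcc p q) :
    ρ.reverse.colliderSectionOcc (ρ.len - q) (ρ.len - p) := by
  obtain ⟨hp, hpq, hq, hund, hin, hout⟩ := h
  refine of_reverse (ρ := ρ.reverse) ⟨hp, hpq, hq, fun m hm hmq => ?_, ?_, ?_⟩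
  · rw [reverse_reverse_nodes (by omega), reverse_reverse_nodes (by omega)]
    exact hund m hm hmq
  · rw [reverse_reverse_nodes (by omega), reverse_reverse_nodes (by omega)]
    exact hin
  · rw [reverse_reverse_nodes (by omega), reverse_reverse_nodes (by omega)]
    exact hout

theorem IsZOpen.reverse (h : ρ.IsZOpen Z) : ρ.reverse.IsZOpen Z := by
  refine ⟨fun k hk => ?_, fun p q hpq => ?_, fun k hk hcol hsec => ?_⟩
  · exact h.1 _ ((colliderNodeAt_reverse (ρ := ρ) hk.2.1.le).1 hk)
  · obtain ⟨m, hm₁, hm₂, hm⟩ := h.2.1 _ _ hpq.of_reverse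
    have hq : q + 1 ≤ ρ.len := hpq.2.2.1
    have := hpq.2.1
    refine ⟨ρ.len - m, by omega, by omega, ?_⟩
    change ρ.nodes (ρ.len - (ρ.len - m)) ∈ Z
    rwa [Nat.sub_sub_self (by omega)]
  · refine h.2.2 _ (Nat.sub_le _ _)
      (fun hc => hcol ((colliderNodeAt_reverse (ρ := ρ) hk).2 hc)) ?_
    rintro ⟨p, q, hocc, hp, hq⟩
    have : k ≤ ρ.len := hk
    have := hocc.2.2.1
    exact hsec ⟨_, _, hocc.reverse, by omega, by omega⟩

end Route

theorem sep_of_forall_route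
    (h : ∀ ρ : G.Route, ρ.IsZOpen Z → ρ.nodes 0 ∈ X → ρ.nodes ρ.len ∉ Y) : G.Sep X Y Z := by
  rintro ⟨ρ, ⟨h0, hlen⟩ | ⟨h0, hlen⟩, hopen⟩
  · exact h ρ hopen h0 hlen
  · refine h ρ.reverse hopen.reverse hlen ?_
    change ρ.nodes (ρ.len - ρ.len) ∈ Y
    rwa [Nat.sub_self]

namespace Route

variable {ρ : G.Route} {k l m p q : ℕ}

theorem inColliderSectionAt.fwd_left (h : ρ.inColliderSectionAt (k + 1)) :
    G.fwd (ρ.nodes k) (ρ.nodes (k + 1)) := by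
  obtain ⟨p, q, ⟨hp, -, -, hund, hin, -⟩, hpk, hkq⟩ := h
  rcases hpk.eq_or_lt with rfl | hpk
  · exact Or.inr (Or.inl hin)
  · exact Or.inl (hund k (by omega) hkq)

theorem IsZOpen.notMem_of_not_fwd (hρ : ρ.IsZOpen Z) (hk : k < ρ.len)
    (h : ¬ G.fwd (ρ.nodes k) (ρ.nodes (k + 1))) : ρ.nodes (k + 1) ∉ Z :=
  hρ.2.2 _ hk (fun hc => h hc.2.2.fwd_left) fun hs => h hs.fwd_left

theorem IsZOpen.exists_mem_of_convergent (hρ : ρ.IsZOpen Z) (hlm : l < m) (hm : m < ρ.len)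
    (hin : G.Directed (ρ.nodes l) (ρ.nodes (l + 1)))
    (hund : ∀ j, l < j → j < m → G.und (ρ.nodes j) (ρ.nodes (j + 1)))
    (hout : G.Directed (ρ.nodes (m + 1)) (ρ.nodes m)) :
    ∃ j, l < j ∧ j ≤ m ∧ ρ.nodes j ∈ Z := by
  obtain rfl | hlt : m = l + 1 ∨ l + 1 < m := by omega
  · obtain ⟨hs, hs'⟩ | hc : (G.solid (ρ.nodes l) (ρ.nodes (l + 1)) ∧
        G.solid (ρ.nodes (l + 1 + 1)) (ρ.nodes (l + 1))) ∨
        G.colliderTriple (ρ.nodes l) (ρ.nodes (l + 1)) (ρ.nodes (l + 1 + 1)) := by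
      unfold colliderTriple
      tauto
    · obtain ⟨j, hj, hjm, hjZ⟩ := hρ.2.1 (l + 1) (l + 1)
        ⟨Nat.le_add_left 1 l, le_rfl, hm, fun j hj hjm => absurd hjm hj.not_gt, hs, hs'⟩
      exact ⟨j, hj, hjm, hjZ⟩
    · exact ⟨l + 1, hlm, le_rfl, hρ.1 _ ⟨Nat.le_add_left 1 l, hm, hc⟩⟩
  · rcases hin with hs | hd
    · rcases hout with hs' | hd'
      · exact hρ.2.1 (l + 1) m ⟨Nat.le_add_left 1 l, hlm, hm, hund, hs, hs'⟩
      · obtain ⟨n, rfl⟩ := Nat.exists_eq_add_of_le' (Nat.one_le_of_lt hlt)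
        exact ⟨n + 1, hlm, le_rfl, hρ.1 _ ⟨Nat.le_add_left 1 n, hm,
          .inr (.inr (.inl ⟨hund n (by omega) n.lt_succ_self, hd'⟩))⟩⟩
    · exact ⟨l + 1, l.lt_succ_self, hlt.le, hρ.1 _ ⟨Nat.le_add_left 1 l, hlt.trans hm,
        .inr (.inl ⟨hd, hund _ l.lt_succ_self hlt⟩)⟩⟩

theorem IsZOpen.descends_of_directed (hρ : ρ.IsZOpen Z) (hk : k < ρ.len)
    (hout : G.Directed (ρ.nodes k) (ρ.nodes (k + 1)))
    (hZ : ∀ c ∈ Z, ¬ G.descends (ρ.nodes k) c) : G.descends (ρ.nodes k) (ρ.nodes ρ.len) := by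
  suffices h : ∀ m, k < m → m ≤ ρ.len → ∃ l < m, G.Directed (ρ.nodes l) (ρ.nodes (l + 1)) ∧
      (∀ j, l < j → j < m → G.und (ρ.nodes j) (ρ.nodes (j + 1))) ∧
      ∀ j, l < j → j ≤ m → G.descends (ρ.nodes k) (ρ.nodes j) by
    obtain ⟨l, hl, -, -, hdesc⟩ := h ρ.len hk le_rfl
    exact hdesc _ hl le_rfl
  intro m hkm
  induction m, hkm using Nat.le_induction with
  | base =>
    intro _
    refine ⟨k, k.lt_succ_self, hout, fun j hj hjk => by omega, fun j hj hjk => ?_⟩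
    obtain rfl : j = k + 1 := by omega
    exact Directed.descends hout
  | succ m hkm ih =>
    intro hm
    obtain ⟨l, hl, hdir, hund, hdesc⟩ := ih (by omega)
    have hm_desc := hdesc m hl le_rfl
    rcases adj_iff.1 (ρ.adj_step m hm) with hu | hd | hd
    · refine ⟨l, by omega, hdir, fun j hj hjm => ?_, fun j hj hjm => ?_⟩
      · obtain rfl | hjm : j = m ∨ j < m := by omega
        exacts [hu, hund j hj hjm]
      · obtain rfl | hjm : j = m + 1 ∨ j ≤ m := by omega
        exacts [hm_desc.reach_right (.single (.inl hu)), hdesc j hj hjm]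
    · refine ⟨m, m.lt_succ_self, hd, fun j hj hjm => by omega, fun j hj hjm => ?_⟩
      obtain rfl : j = m + 1 := by omega
      exact hm_desc.reach_right (.single (.inr hd))
    · obtain ⟨j, hj, hjm, hjZ⟩ := hρ.exists_mem_of_convergent hl hm hdir hund hd
      exact absurd (hdesc j hj hjm) (hZ _ hjZ)

theorem exists_undirected_prefix (ρ : G.Route) : ∃ k ≤ ρ.len,
    (∀ m < k, G.und (ρ.nodes m) (ρ.nodes (m + 1))) ∧
    (k < ρ.len → ¬ G.und (ρ.nodes k) (ρ.nodes (k + 1))) := by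
  have hex : ∃ k, k < ρ.len → ¬ G.und (ρ.nodes k) (ρ.nodes (k + 1)) :=
    ⟨ρ.len, fun h => absurd h (lt_irrefl _)⟩
  refine ⟨Nat.find hex, Nat.find_min' hex fun h => absurd h (lt_irrefl _), fun m hm => ?_,
    Nat.find_spec hex⟩
  exact not_not.1 (Classical.not_imp.1 (Nat.find_min hex hm)).2

end Route

end PreGraph

namespace ChainGraph

open PreGraph

variable [Fintype V] [DecidableEq V] {G : ChainGraph V} {i : V}
  {I : Finset V → Finset V → Finset V → Prop}

theorem mem_cc_or_descends_of_isZOpen {ρ : G.Route}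
    (hρ : ρ.IsZOpen (G.fa (G.cc i) ∪ G.mo {i})) (h0 : ρ.nodes 0 = i) :
    ρ.nodes ρ.len ∈ G.cc i ∨ G.descends i (ρ.nodes ρ.len) := by
  have hZ : G.fa (G.cc i) ∪ G.mo {i} ⊆ G.nd {i} \ G.cc i := Finset.union_subset (G.fa_cc_subset i)
    ((mo_mono (Finset.singleton_subset_iff.2 (self_mem_cc i))).trans (G.mo_cc_subset i))
  obtain ⟨k, hk, hund, hmax⟩ := ρ.exists_undirected_prefix
  have hconn : G.uconn i (ρ.nodes k) := h0 ▸ reflTransGen_of_seq k.zero_le fun m _ => hund m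
  obtain rfl | hk := hk.eq_or_lt
  · exact Or.inl (mem_cc.2 hconn)
  rcases adj_iff.1 (ρ.adj_step k hk) with hu | hout | hin
  · exact absurd hu (hmax hk)
  · refine Or.inr (.reach_left (hρ.descends_of_directed hk hout fun c hc hkc => ?_)
      (.of_uconn hconn))
    exact mem_nd_singleton.1 (Finset.mem_sdiff.1 (hZ hc)).1 (hkc.reach_left (.of_uconn hconn))
  · have hnotMem := hρ.notMem_of_not_fwd hk (G.not_fwd_of_directed hin)
    exfalso
    rcases hin with hs | hd
    · exact hnotMem (Finset.mem_union_left _ (mem_fa.2 ⟨_, mem_cc.2 hconn, hs⟩))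
    cases k with
    | zero => exact hnotMem (Finset.mem_union_right _ (mem_mo_singleton.2 (h0 ▸ hd)))
    | succ k =>
      have hmem := hρ.1 (k + 1)
        ⟨Nat.le_add_left 1 k, hk, .inr (.inr (.inl ⟨hund k k.lt_succ_self, hd⟩))⟩
      exact (Finset.mem_sdiff.1 (hZ hmem)).2 (mem_cc.2 hconn)

theorem eq_or_descends_of_isZOpen {ρ : G.Route}
    (hρ : ρ.IsZOpen (G.boundary i)) (h0 : ρ.nodes 0 = i) :
    ρ.nodes ρ.len = i ∨ G.descends i (ρ.nodes ρ.len) := by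
  obtain hlen | hlen := ρ.len.eq_zero_or_pos
  · exact Or.inl (hlen ▸ h0)
  rcases adj_iff.1 (ρ.adj_step 0 hlen) with hu | hout | hin
  · exfalso
    have hmem : ρ.nodes 1 ∈ G.nb {i} := mem_nb_singleton.2 (und_comm.1 (h0 ▸ hu))
    have hcol : ρ.colliderNodeAt 1 := by
      by_contra hcol
      refine hρ.2.2 1 hlen hcol ?_
        (by simp only [boundary, Finset.mem_union, hmem, true_or, or_true])
      rintro ⟨p, q, ⟨hp, -, -, -, hin, -⟩, hp1, -⟩
      obtain rfl : p = 1 := by omega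
      exact (G.not_directed_of_und hu).1 hin
    obtain ⟨-, hlen1, htriple⟩ := hcol
    have hd : G.dashed (ρ.nodes 2) (ρ.nodes 1) := by
      have := G.not_directed_of_und hu
      unfold colliderTriple at htriple
      tauto
    exact hρ.notMem_of_not_fwd hlen1 (G.not_fwd_of_directed (.inr hd))
      (Finset.mem_union_right _ (mem_mo.2 ⟨_, hmem, hd⟩))
  · rw [← h0]
    refine Or.inr (hρ.descends_of_directed hlen hout fun c hc => ?_)
    rw [h0]
    exact mem_nd_singleton.1 (Finset.mem_sdiff.1 (G.boundary_subset_nd i hc)).1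
  · refine absurd ?_ (hρ.notMem_of_not_fwd hlen (G.not_fwd_of_directed hin))
    have hpa : ρ.nodes 1 ∈ G.pa {i} := mem_pa_singleton.2 (h0 ▸ hin)
    simp only [boundary, Finset.mem_union, hpa, true_or]

theorem localMP_of_globalMP (h : G.globalMP I) : G.localMP I := by
  intro K hK i hi
  obtain rfl := eq_cc_of_mem_ccs hK hi
  have hmo : G.mo {i} ⊆ G.mo (G.cc i) := mo_mono (Finset.singleton_subset_iff.2 hi)
  have hfaK := G.fa_cc_subset i
  have hmoK := G.mo_cc_subset i
  have hbd := G.boundary_subset_nd i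
  constructor
  · refine h _ _ _ ⟨?_, ?_, ?_⟩ (sep_of_forall_route fun ρ hρ h0 hY => ?_)
    iterate 3 rw [Finset.disjoint_left]; grind
    have := mem_nd_singleton (G := G.toPreGraph) (a := i) (b := ρ.nodes ρ.len)
    have := mem_cc_or_descends_of_isZOpen hρ (Finset.mem_singleton.1 h0)
    grind
  · rw [boundary] at hbd
    refine h _ _ _ ⟨?_, ?_, ?_⟩ (sep_of_forall_route fun ρ hρ h0 hY => ?_)
    iterate 3 rw [Finset.disjoint_left]; grind
    have := mem_nd_singleton (G := G.toPreGraph) (a := i) (b := ρ.nodes ρ.len)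
    have := eq_or_descends_of_isZOpen hρ (Finset.mem_singleton.1 h0)
    grind

theorem indep_of_boundary_subset (hI : IsLeftSemigraphoid I) (h : G.localMP I)
    {Y Z : Finset V} (hZ : G.boundary i ⊆ Z) (hZnd : Z ⊆ G.nd {i} \ {i})
    (hY : Y ⊆ G.nd {i} \ {i}) : I {i} Y Z := by
  have hcover : G.nd {i} \ {i} ⊆ G.boundary i ∪
      (((G.nd {i} \ {i}) \ G.pa {i}) \ G.nb {i}) \ G.mo (G.nb {i}) := by
    rw [boundary]
    grind
  exact hI.weakUnion (h _ (cc_mem_ccs i) i (self_mem_cc i)).2 hZ (hZnd.trans hcover)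
    (hY.trans hcover)

theorem blockRecMP_of_localMP (hI : IsLeftSemigraphoid I) (h : G.localMP I) :
    G.blockRecMP I := by
  intro K hK i hi
  obtain rfl := eq_cc_of_mem_ccs hK hi
  have hself := Finset.singleton_subset_iff.2 hi
  have hfa : G.fa {i} ⊆ G.fa (G.cc i) := fa_mono hself
  have hbd := G.boundary_subset i
  have hcc := G.cc_subset_nd i
  have hfaK := G.fa_cc_subset i
  have hmoK := G.mo_cc_subset i
  rw [nd_cc, pa]
  refine ⟨(h _ hK i hi).1, indep_of_boundary_subset hI h ?_ ?_ ?_, fun j hj hji hjn =>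
    indep_of_boundary_subset hI h ?_ ?_ ?_⟩
  all_goals grind

theorem pairwiseMP_of_blockRecMP (hI : IsLeftSemigraphoid I) (h : G.blockRecMP I) :
    G.pairwiseMP I := by
  intro i j hij hadj K hK hi
  obtain ⟨hB1, hB2, hB3⟩ := h K hK i hi
  obtain rfl := eq_cc_of_mem_ccs hK hi
  have hself := Finset.singleton_subset_iff.2 hi
  have hfa : G.fa {i} ⊆ G.fa (G.cc i) := fa_mono hself
  have hmo : G.mo {i} ⊆ G.mo (G.cc i) := mo_mono hself
  have hcc := G.cc_subset_nd i
  have hfaK := G.fa_cc_subset i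
  have hmoK := G.mo_cc_subset i
  rw [nd_cc] at hB1 hB2
  rw [pa] at hB3
  refine ⟨fun hj => hI.weakUnion hB1 ?_ ?_ ?_, fun hj => ?_⟩
  · grind
  · grind
  · grind
  by_cases hjK : j ∈ G.cc i
  · have hjn : j ∉ G.nb {i} := fun hn => hadj (Or.inl (und_comm.1 (mem_nb_singleton.1 hn)))
    have hB2' : I {i} ((G.nd {i} \ G.cc i) \ (G.fa (G.cc i) ∪ G.mo (G.cc i)))
        ((G.cc i \ {i}) ∪ (G.fa (G.cc i) ∪ G.mo (G.cc i))) := by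
      refine hI.weakUnion hB2 ?_ ?_ ?_ <;> grind
    have hunion := hI.contraction hB2' (hB3 j hjK hij.symm hjn) (by grind) (by grind)
    refine hI.weakUnion hunion ?_ ?_ ?_ <;> grind
  · refine hI.weakUnion hB2 ?_ ?_ ?_ <;> grind

end ChainGraph

/-- The covariance matrix of the errors `X - A X` of a system of linear equations `X = A X + ε`,
where `X` has covariance matrix `S`. -/
def errorCov [Fintype V] [DecidableEq V] (A S : Matrix V V ℝ) : Matrix V V ℝ :=
  (1 - A) * S * (1 - A)ᵀ

/-- `S` is the covariance matrix of the system of structural equations `X = (B + L C) X + ε` with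
error covariance matrix `L` and error precision matrix `P`. The dashed edges are the support of `B`,
the solid edges that of `C`, and the undirected edges that of `P`; the factor `L` makes a solid edge
into a node act on its whole chain component. -/
structure PreGraph.IsStructural [Fintype V] [DecidableEq V] (G : PreGraph V)
    (B C P L S : Matrix V V ℝ) : Prop where
  dashed_of_ne : ∀ {i j}, B i j ≠ 0 → G.dashed j i
  solid_of_ne : ∀ {i j}, C i j ≠ 0 → G.solid j i
  und_of_ne : ∀ {i j}, P i j ≠ 0 → i = j ∨ G.und i j
  uconn_of_ne : ∀ {i j}, L i j ≠ 0 → G.uconn i j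
  mul_eq_one : P * L = 1
  errorCov_eq : errorCov (B + L * C) S = L

theorem errorCov_apply [Fintype V] [DecidableEq V] (A S : Matrix V V ℝ) (i j : V) :
    errorCov A S i j = ((1 - A) * S) i j - ∑ k, ((1 - A) * S) i k * A j k := by
  rw [errorCov, Matrix.transpose_sub, Matrix.transpose_one, Matrix.mul_sub, Matrix.mul_one,
    Matrix.sub_apply, Matrix.mul_apply]
  rfl

theorem errorCov_isSymm [Fintype V] [DecidableEq V] {S : Matrix V V ℝ} (hS : S.IsSymm)
    (A : Matrix V V ℝ) : (errorCov A S).IsSymm := by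
  rw [Matrix.IsSymm, errorCov, Matrix.transpose_mul, Matrix.transpose_mul, hS.eq,
    Matrix.transpose_transpose, Matrix.mul_assoc]

namespace ChainGraph

open PreGraph

variable [Fintype V] [DecidableEq V] {G : ChainGraph V} {S β : Matrix V V ℝ} {i j k : V}

/-- The rows of `β` are the regression coefficients of the nodes on their nondescendants outside
their chain components, and only fathers of the component and mothers of the node contribute. -/
structure IsBlockRegression (G : ChainGraph V) (β S : Matrix V V ℝ) : Prop where
  mem_of_ne : ∀ {i j}, β i j ≠ 0 → j ∈ G.fa (G.cc i) ∪ G.mo {i}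
  mul_apply : ∀ {i j}, j ∈ G.nd {i} \ G.cc i → (β * S) i j = S i j

theorem exists_isBlockRegression (hS : S.PosDef) (h : G.pairwiseMP (gaussCI S)) :
    ∃ β, G.IsBlockRegression β S := by
  choose β hβ hβS using fun i => exists_vecMul_eq_on hS (G.nd {i} \ G.cc i) (S i)
  refine ⟨Matrix.of β, fun {i j} hne => by_contra fun hj => hne ?_, fun hj => ?_⟩
  · by_cases hjD : j ∈ G.nd {i} \ G.cc i
    · have hij : i ≠ j := by
        rintro rfl
        exact (Finset.mem_sdiff.1 hjD).2 (self_mem_cc i)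
      have hadj : ¬ G.adj i j := by
        have hself := Finset.singleton_subset_iff.2 (self_mem_cc (G := G.toPreGraph) i)
        rw [adj_iff]
        rintro (hu | hd | hs | hd)
        · exact (Finset.mem_sdiff.1 hjD).2 (mem_cc.2 (.single hu))
        · exact mem_nd_singleton.1 (Finset.mem_sdiff.1 hjD).1 (Directed.descends hd)
        · exact hj (Finset.mem_union_left _ (fa_mono hself (mem_fa_singleton.2 hs)))
        · exact hj (Finset.mem_union_right _ (mem_mo_singleton.2 hd))
      exact regression_eq_zero_of_gaussCI hS (hβ i) (hβS i)
        ((h i j hij hadj _ (cc_mem_ccs i) (self_mem_cc i)).1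
          (by simpa only [Finset.mem_sdiff, Finset.mem_union, not_or, and_assoc] using
            And.intro hjD hj))
    · exact hβ i j hjD
  · rw [Matrix.mul_apply_eq_vecMul]
    exact hβS _ _ hj

namespace IsBlockRegression

theorem mem_sdiff_of_ne (hβ : G.IsBlockRegression β S) (h : β i j ≠ 0) :
    j ∈ G.nd {i} \ G.cc i := by
  have hmo : G.mo {i} ⊆ G.mo (G.cc i) := mo_mono (Finset.singleton_subset_iff.2 (self_mem_cc i))
  exact Finset.union_subset (G.fa_cc_subset i) (hmo.trans (G.mo_cc_subset i)) (hβ.mem_of_ne h)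

theorem descends_of_ne (hβ : G.IsBlockRegression β S) (h : β i j ≠ 0) : G.descends j i := by
  rcases Finset.mem_union.1 (hβ.mem_of_ne h) with hj | hj
  · obtain ⟨k, hk, hjk⟩ := mem_fa.1 hj
    exact (Directed.descends (.inl hjk)).reach_right (.of_uconn (uconn_symm (mem_cc.1 hk)))
  · exact Directed.descends (.inr (mem_mo_singleton.1 hj))

theorem isUnit_det_one_sub (hβ : G.IsBlockRegression β S) : IsUnit (1 - β).det := by
  have : IsTrans V fun i j => G.descends j i := ⟨fun _ _ _ h h' => h'.reach_right h.reach⟩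
  have : Std.Irrefl fun i j : V => G.descends j i := ⟨fun _ h => G.not_reach_of_descends h .refl⟩
  exact isUnit_det_one_sub_of_wellFounded (Finite.wellFounded_of_trans_of_irrefl _)
    fun i j => hβ.descends_of_ne

theorem one_sub_mul_apply_eq_zero (hβ : G.IsBlockRegression β S) (hj : j ∈ G.nd {i} \ G.cc i) :
    ((1 - β) * S) i j = 0 := by
  rw [Matrix.sub_mul, Matrix.one_mul, Matrix.sub_apply, hβ.mul_apply hj, sub_self]

theorem errorCov_apply_of_not_descends (hβ : G.IsBlockRegression β S) (hd : ¬ G.descends i j) :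
    errorCov β S i j = ((1 - β) * S) i j := by
  rw [errorCov_apply, Finset.sum_eq_zero, sub_zero]
  intro k _
  by_cases hk : β j k = 0
  · rw [hk, mul_zero]
  · have hkj := hβ.descends_of_ne hk
    rw [hβ.one_sub_mul_apply_eq_zero, zero_mul]
    rw [Finset.mem_sdiff, mem_nd_singleton, mem_cc]
    exact ⟨fun hik => hd (hik.reach_right hkj.reach),
      fun hik => hd (hkj.reach_left (.of_uconn hik))⟩

theorem errorCov_eq_zero (hβ : G.IsBlockRegression β S) (hS : S.PosDef) (hu : ¬ G.uconn i j) :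
    errorCov β S i j = 0 := by
  wlog hd : ¬ G.descends i j generalizing i j
  · have hSsymm : S.IsSymm := Matrix.isHermitian_iff_isSymm.1 hS.isHermitian
    rw [← (errorCov_isSymm hSsymm β).apply]
    exact this (fun hji => hu (uconn_symm hji))
      fun hji => G.not_reach_of_descends (not_not.1 hd) hji.reach
  rw [hβ.errorCov_apply_of_not_descends hd, hβ.one_sub_mul_apply_eq_zero]
  rw [Finset.mem_sdiff, mem_nd_singleton, mem_cc]
  exact ⟨hd, hu⟩

theorem isUnit_det_errorCov (hβ : G.IsBlockRegression β S) (hS : S.PosDef) :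
    IsUnit (errorCov β S).det := by
  rw [errorCov, Matrix.det_mul, Matrix.det_mul, Matrix.det_transpose]
  exact (hβ.isUnit_det_one_sub.mul ((Matrix.isUnit_iff_isUnit_det _).1 hS.isUnit)).mul
    hβ.isUnit_det_one_sub

theorem errorPrecision_eq_zero (hβ : G.IsBlockRegression β S) (hS : S.PosDef)
    (hu : ¬ G.uconn i j) : (errorCov β S)⁻¹ i j = 0 :=
  apply_eq_zero_of_mul_eq_one_of_block uconn_equivalence
    (Matrix.nonsing_inv_mul _ (hβ.isUnit_det_errorCov hS))
    (fun _ _ => hβ.errorCov_eq_zero hS) hu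

theorem errorPrecision_mul_apply_eq_zero_of_uconn (hβ : G.IsBlockRegression β S) (hS : S.PosDef)
    (hij : G.uconn i j) : ((errorCov β S)⁻¹ * β) i j = 0 := by
  rw [Matrix.mul_apply]
  refine Finset.sum_eq_zero fun k _ => mul_eq_zero.2 (or_iff_not_imp_left.2 fun hik => ?_)
  have hu : G.uconn i k := not_not.1 fun hu => hik (hβ.errorPrecision_eq_zero hS hu)
  by_contra hkj
  exact (Finset.mem_sdiff.1 (hβ.mem_sdiff_of_ne hkj)).2 (mem_cc.2 ((uconn_symm hu).trans hij))

theorem mem_nd_of_errorPrecision_mul_ne (hβ : G.IsBlockRegression β S) (hS : S.PosDef)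
    (hne : ((errorCov β S)⁻¹ * (1 - β)) i j ≠ 0) : j ∈ G.nd {i} := by
  rw [Matrix.mul_apply] at hne
  obtain ⟨k, -, hk⟩ := Finset.exists_ne_zero_of_sum_ne_zero hne
  have hik : G.uconn i k :=
    not_not.1 fun hu => left_ne_zero_of_mul hk (hβ.errorPrecision_eq_zero hS hu)
  rw [nd_eq_of_uconn hik]
  by_cases hkj : β k j = 0
  · have hkj_eq : k = j := by
      by_contra hne_kj
      exact right_ne_zero_of_mul hk (by rw [Matrix.sub_apply, Matrix.one_apply_ne hne_kj, hkj,
        sub_zero])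
    exact hkj_eq ▸ mem_nd_singleton.2 (G.not_descends_of_uconn .refl)
  · exact (Finset.mem_sdiff.1 (hβ.mem_sdiff_of_ne hkj)).1

theorem errorPrecision_mul_mul_apply (hβ : G.IsBlockRegression β S) (hS : S.PosDef)
    (hj : j ∈ G.nd {i}) : ((errorCov β S)⁻¹ * ((1 - β) * S)) i j = (1 : Matrix V V ℝ) i j := by
  have hPL := Matrix.nonsing_inv_mul _ (hβ.isUnit_det_errorCov hS)
  rw [← congrFun₂ hPL i j, Matrix.mul_apply, Matrix.mul_apply]
  refine Finset.sum_congr rfl fun k _ => ?_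
  by_cases hik : G.uconn i k
  · rw [nd_eq_of_uconn hik, mem_nd_singleton] at hj
    rw [hβ.errorCov_apply_of_not_descends hj]
  · rw [hβ.errorPrecision_eq_zero hS hik, zero_mul, zero_mul]

theorem errorPrecision_mul_one_sub_apply_eq_zero (hβ : G.IsBlockRegression β S) (hS : S.PosDef)
    (h : G.pairwiseMP (gaussCI S)) (hij : i ≠ j) (hadj : ¬ G.adj i j) (hd : ¬ G.descends i j)
    (hmo : j ∉ G.mo (G.cc i)) : ((errorCov β S)⁻¹ * (1 - β)) i j = 0 := by
  refine precision_eq_zero_of_gaussCI hS hij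
    (mem_nd_singleton.2 (G.not_descends_of_uconn .refl))
    (fun v hv => not_not.1 fun hne => hv (hβ.mem_nd_of_errorPrecision_mul_ne hS hne))
    (fun w hw => ?_) ((h i j hij hadj _ (cc_mem_ccs i) (self_mem_cc i)).2 ?_)
  · rw [← Matrix.mul_apply_eq_vecMul, Matrix.mul_assoc]
    exact hβ.errorPrecision_mul_mul_apply hS hw
  · simp only [Finset.mem_sdiff, mem_nd_singleton, Finset.mem_singleton, mem_fa_singleton]
    exact ⟨⟨⟨hd, hij.symm⟩, fun hs => hadj (adj_iff.2 (.inr (.inr (.inl hs))))⟩, hmo⟩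

theorem eq_or_und_of_errorPrecision_ne (hβ : G.IsBlockRegression β S) (hS : S.PosDef)
    (h : G.pairwiseMP (gaussCI S)) (hne : (errorCov β S)⁻¹ i j ≠ 0) : i = j ∨ G.und i j := by
  by_contra hn
  rw [not_or] at hn
  have hij : G.uconn i j := not_not.1 fun hu => hne (hβ.errorPrecision_eq_zero hS hu)
  have hadj : ¬ G.adj i j := by
    rw [adj_iff]
    rintro (hu | hd | hd)
    · exact hn.2 hu
    · exact G.not_uconn_of_directed hd (uconn_symm hij) .refl
    · exact G.not_uconn_of_directed hd hij .refl
  have hmo : j ∉ G.mo (G.cc i) := fun hj =>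
    (Finset.mem_sdiff.1 (G.mo_cc_subset i hj)).2 (mem_cc.2 hij)
  have hzero := hβ.errorPrecision_mul_one_sub_apply_eq_zero hS h hn.1 hadj
    (G.not_descends_of_uconn hij) hmo
  rw [Matrix.mul_sub, Matrix.mul_one, Matrix.sub_apply,
    hβ.errorPrecision_mul_apply_eq_zero_of_uconn hS hij, sub_zero] at hzero
  exact hne hzero

theorem solid_of_errorPrecision_mul_ne (hβ : G.IsBlockRegression β S) (hS : S.PosDef)
    (hG : G.IsUCG) (h : G.pairwiseMP (gaussCI S)) (hj : j ∈ G.fa (G.cc i))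
    (hne : ((errorCov β S)⁻¹ * β) i j ≠ 0) : G.solid j i := by
  by_contra hn
  have hmo : j ∉ G.mo (G.cc i) := Finset.disjoint_left.1 (hG _ (cc_mem_ccs i)) hj
  obtain ⟨hd, hu⟩ := Finset.mem_sdiff.1 (G.fa_cc_subset i hj)
  rw [mem_nd_singleton] at hd
  rw [mem_cc] at hu
  have hadj : ¬ G.adj i j := by
    rw [adj_iff]
    rintro (hij | hij | hs | hm)
    · exact hu (.single hij)
    · exact hd (Directed.descends hij)
    · exact hn hs
    · exact hmo (mem_mo.2 ⟨i, self_mem_cc i, hm⟩)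
  have hzero := hβ.errorPrecision_mul_one_sub_apply_eq_zero hS h
    (by rintro rfl; exact hu .refl) hadj hd hmo
  rw [Matrix.mul_sub, Matrix.mul_one, Matrix.sub_apply, hβ.errorPrecision_eq_zero hS hu, zero_sub,
    neg_eq_zero] at hzero
  exact hne hzero

end IsBlockRegression

theorem exists_isStructural (hG : G.IsUCG) (hS : S.PosDef) (h : G.pairwiseMP (gaussCI S)) :
    ∃ B C P L, G.IsStructural B C P L S := by
  obtain ⟨β, hβ⟩ := exists_isBlockRegression hS h
  have hdet := hβ.isUnit_det_errorCov hS
  let C : Matrix V V ℝ :=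
    Matrix.of fun i j => if j ∈ G.fa (G.cc i) then ((errorCov β S)⁻¹ * β) i j else 0
  let B : Matrix V V ℝ := Matrix.of fun i j => if j ∈ G.fa (G.cc i) then 0 else β i j
  have hβBC : B + errorCov β S * C = β := by
    have hLC : errorCov β S * C = Matrix.of fun i j => if j ∈ G.fa (G.cc i) then
        (errorCov β S * ((errorCov β S)⁻¹ * β)) i j else 0 :=
      mul_of_ite_of_block fun i j k hik => by
        rw [cc_eq_of_uconn (not_not.1 fun hu => hik (hβ.errorCov_eq_zero hS hu))]
    rw [hLC, Matrix.mul_nonsing_inv_cancel_left _ _ hdet]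
    ext i j
    by_cases hj : j ∈ G.fa (G.cc i) <;> simp [B, hj]
  refine ⟨B, C, (errorCov β S)⁻¹, errorCov β S, fun {i j} hne => ?_, fun {i j} hne => ?_,
    hβ.eq_or_und_of_errorPrecision_ne hS h,
    fun hne => not_not.1 fun hu => hne (hβ.errorCov_eq_zero hS hu),
    Matrix.nonsing_inv_mul _ hdet, by rw [hβBC]⟩
  · obtain ⟨hj, hne⟩ := ite_ne_left_iff.1 hne
    exact mem_mo_singleton.1 ((Finset.mem_union.1 (hβ.mem_of_ne hne.symm)).resolve_left hj)
  · obtain ⟨hj, hne⟩ := ite_ne_right_iff.1 hne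
    exact hβ.solid_of_errorPrecision_mul_ne hS hG h hj hne

end ChainGraph

/-- How a route under traversal arrives at its current node: `tail` at the start or against a
directed edge, `dashed` along a dashed edge, `solid` in a section entered along a solid edge whose
preceding nodes avoid the conditioning set, `solidHit` in a section entered along a solid edge with
a preceding node in the conditioning set, and `undirected` in any other section. -/
inductive Arrival
  | tail | undirected | dashed | solid | solidHit

namespace Arrival

/-- The traversal is not committed to leave the current section against a solid edge. -/
def Passive (a : Arrival) : Prop := a ≠ solidHit

/-- The current node is not reached along its arrowhead, and its section is not a collider
section. -/
def Loose (a : Arrival) : Prop := a = tail ∨ a = undirected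

end Arrival

namespace PreGraph

/-- The one-edge continuations of a `Z`-open route, as transitions of an automaton: whether an edge
at `c` may be taken depends on how `c` was reached and on whether `c` lies in `Z`. -/
inductive OpenStep (G : PreGraph V) (Z : Finset V) : Arrival → V → Arrival → V → Prop
  | solidOut {a c d} (h : G.solid c d) (ha : a.Passive) (hc : c ∉ Z) : OpenStep G Z a c .solid d
  | dashedOut {a c d} (h : G.dashed c d) (ha : a.Passive) (hc : c ∉ Z) : OpenStep G Z a c .dashed d
  | undLoose {a c d} (h : G.und c d) (ha : a.Loose) (hc : c ∉ Z) : OpenStep G Z a c .undirected d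
  | undDashed {c d} (h : G.und c d) (hc : c ∈ Z) : OpenStep G Z .dashed c .undirected d
  | undSolid {c d} (h : G.und c d) (hc : c ∉ Z) : OpenStep G Z .solid c .solid d
  | undSolidMem {c d} (h : G.und c d) (hc : c ∈ Z) : OpenStep G Z .solid c .solidHit d
  | undSolidHit {c d} (h : G.und c d) : OpenStep G Z .solidHit c .solidHit d
  | solidInLoose {a c d} (h : G.solid d c) (ha : a.Loose) (hc : c ∉ Z) : OpenStep G Z a c .tail d
  | solidInDashed {c d} (h : G.solid d c) (hc : c ∈ Z) : OpenStep G Z .dashed c .tail d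
  | solidInSolid {c d} (h : G.solid d c) (hc : c ∈ Z) : OpenStep G Z .solid c .tail d
  | solidInSolidHit {c d} (h : G.solid d c) : OpenStep G Z .solidHit c .tail d
  | dashedInTail {c d} (h : G.dashed d c) (hc : c ∉ Z) : OpenStep G Z .tail c .tail d
  | dashedInMem {a c d} (h : G.dashed d c) (ht : a ≠ .tail) (ha : a.Passive) (hc : c ∈ Z) :
      OpenStep G Z a c .tail d

/-- A node and a manner of arriving at it that end some `Z`-open traversal from `X`. -/
def OpenReach (G : PreGraph V) (X Z : Finset V) (a : Arrival) (c : V) : Prop :=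
  ∃ x ∈ X, Relation.ReflTransGen (fun p q : Arrival × V => G.OpenStep Z p.1 p.2 q.1 q.2)
    (.tail, x) (a, c)

/-- The nodes `f 0, …, f n` are traversed with arrivals `s 0, …, s n` by admissible steps. -/
structure OpenRun (G : PreGraph V) (Z : Finset V) (s : ℕ → Arrival) (f : ℕ → V) (n : ℕ) :
    Prop where
  start_eq_tail : s 0 = .tail
  step : ∀ i < n, G.OpenStep Z (s i) (f i) (s (i + 1)) (f (i + 1))

variable {G : PreGraph V} {X Y Z : Finset V} {a b : Arrival} {c d : V}

theorem OpenReach.start {x : V} (hx : x ∈ X) : G.OpenReach X Z .tail x := ⟨x, hx, .refl⟩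

theorem OpenReach.step (h : G.OpenReach X Z a c) (hstep : G.OpenStep Z a c b d) :
    G.OpenReach X Z b d := by
  obtain ⟨x, hx, h⟩ := h
  exact ⟨x, hx, h.tail hstep⟩

theorem OpenReach.exists_openRun (h : G.OpenReach X Z a c) :
    ∃ s f n, G.OpenRun Z s f n ∧ f 0 ∈ X ∧ s n = a ∧ f n = c := by
  obtain ⟨x, hx, h⟩ := h
  obtain ⟨n, g, h0, hn, hg⟩ := exists_seq_of_reflTransGen h
  rw [Prod.ext_iff] at h0 hn
  exact ⟨fun i => (g i).1, fun i => (g i).2, n, ⟨h0.1, hg⟩,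
    (by rwa [h0.2] : (g 0).2 ∈ X), hn⟩

namespace OpenStep

theorem adj (h : G.OpenStep Z a c b d) : G.adj c d := by
  rw [adj_iff]
  cases h <;> tauto

theorem fwd (h : G.OpenStep Z a c b d) (hb : b ≠ .tail) : G.fwd c d := by
  unfold PreGraph.fwd
  cases h <;> first | contradiction | tauto

theorem solid_or_und (h : G.OpenStep Z a c b d) (hb : b = .solid ∨ b = .solidHit) :
    G.solid c d ∨ G.und c d ∧ (a = .solid ∨ a = .solidHit) := by
  cases h <;> simp_all

theorem und_of_undirected (h : G.OpenStep Z a c .undirected d) : G.und c d := by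
  cases h <;> assumption

theorem dashed_of_dashed (h : G.OpenStep Z a c .dashed d) : G.dashed c d := by
  cases h
  assumption

theorem ne_tail_of_mem (h : G.OpenStep Z a c b d) (hc : c ∈ Z) : a ≠ .tail := by
  rintro rfl
  cases h <;> contradiction

theorem dashed_rev_of_mem_of_undirected (h : G.OpenStep Z .undirected c b d) (hc : c ∈ Z) :
    G.dashed d c := by
  cases h <;> first | contradiction | assumption

theorem und_or_directed_rev_of_mem_of_dashed (h : G.OpenStep Z .dashed c b d) (hc : c ∈ Z) :
    G.und c d ∨ G.Directed d c := by
  cases h <;> first | contradiction | tauto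

theorem und_or_directed_rev_of_mem_of_solid (h : G.OpenStep Z .solid c b d) (hc : c ∈ Z) :
    G.und c d ∧ b = .solidHit ∨ G.Directed d c := by
  cases h <;> first | contradiction | tauto

theorem und_or_solid_rev_of_solidHit (h : G.OpenStep Z .solidHit c b d) :
    G.und c d ∧ b = .solidHit ∨ G.solid d c := by
  cases h <;> simp_all [Arrival.Loose, Arrival.Passive]

theorem mem_of_dashed (h : G.OpenStep Z .dashed c b d) (hcd : ¬ G.Directed c d) : c ∈ Z := by
  cases h <;> simp_all [Arrival.Loose, Directed]

section ChainGraph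

variable {G : ChainGraph V}

theorem ne_tail_of_fwd (h : G.OpenStep Z a c b d) (hcd : G.fwd c d) : b ≠ .tail := by
  rintro rfl
  cases h <;> exact G.not_fwd_of_directed (by tauto) hcd

theorem eq_solid_of_solid (h : G.OpenStep Z a c b d) (hcd : G.solid c d) : b = .solid := by
  have := G.not_of_solid hcd
  cases h <;> tauto

theorem eq_dashed_of_dashed (h : G.OpenStep Z a c b d) (hcd : G.dashed c d) : b = .dashed := by
  have := G.not_of_dashed hcd
  cases h <;> tauto

theorem mem_of_dashed_rev (h : G.OpenStep Z a c b d) (hdc : G.dashed d c) (ha : a ≠ .tail) :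
    c ∈ Z := by
  have := G.not_of_dashed hdc
  cases h <;> tauto

theorem mem_of_solid_of_solid_rev (h : G.OpenStep Z .solid c b d) (hdc : G.solid d c) :
    c ∈ Z := by
  have := G.not_of_solid hdc
  cases h <;> simp_all [Arrival.Loose]

theorem eq_solid_or_of_und (h : G.OpenStep Z .solid c b d) (hcd : G.und c d) :
    b = .solid ∨ c ∈ Z ∧ b = .solidHit := by
  have := G.not_directed_of_und hcd
  cases h <;> simp_all [Arrival.Loose]

theorem eq_solidHit_of_und (h : G.OpenStep Z .solidHit c b d) (hcd : G.und c d) :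
    b = .solidHit := by
  have := G.not_directed_of_und hcd
  cases h <;> simp_all [Arrival.Loose]

end ChainGraph

end OpenStep

namespace OpenRun

variable {s : ℕ → Arrival} {f : ℕ → V} {k m n p q : ℕ}

/-- The route traversed. -/
def toRoute (h : G.OpenRun Z s f n) : G.Route := ⟨n, f, fun i hi => (h.step i hi).adj⟩

theorem exists_eq_succ (h : G.OpenRun Z s f n) (hk : s k ≠ .tail) : ∃ j, k = j + 1 :=
  Nat.exists_eq_succ_of_ne_zero fun h0 => hk (h0 ▸ h.start_eq_tail)

theorem exists_section_start (h : G.OpenRun Z s f n) (hm : m ≤ n)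
    (hs : s m = .solid ∨ s m = .solidHit) : ∃ p, p + 1 ≤ m ∧
      (∀ i, p + 1 ≤ i → i < m → G.und (f i) (f (i + 1))) ∧ G.solid (f p) (f (p + 1)) := by
  induction m with
  | zero => simp [h.start_eq_tail] at hs
  | succ m ih =>
    rcases (h.step m hm).solid_or_und hs with hsolid | ⟨hund, hs⟩
    · exact ⟨m, le_rfl, fun i hi him => absurd him hi.not_gt, hsolid⟩
    · obtain ⟨p, hpm, hund', hin⟩ := ih (Nat.le_of_succ_le hm) hs
      refine ⟨p, by omega, fun i hi him => ?_, hin⟩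
      obtain rfl | him := (Nat.le_of_lt_succ him).eq_or_lt
      exacts [hund, hund' i hi him]

theorem exists_section_end (h : G.OpenRun Z s f n) (hn : (s n).Passive) (hm : m ≤ n)
    (hs : s m = .solidHit) : ∃ q, m ≤ q ∧ q < n ∧
      (∀ i, m ≤ i → i < q → G.und (f i) (f (i + 1))) ∧ G.solid (f (q + 1)) (f q) := by
  induction hm using Nat.decreasingInduction with
  | self => exact absurd hs hn
  | of_succ m hm ih =>
    have hstep := h.step m hm
    rw [hs] at hstep
    rcases hstep.und_or_solid_rev_of_solidHit with ⟨hund, hs⟩ | hsolid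
    · obtain ⟨q, hmq, hqn, hund', hout⟩ := ih hs
      refine ⟨q, by omega, hqn, fun i hi hiq => ?_, hout⟩
      obtain rfl | hi := hi.eq_or_lt
      exacts [hund, hund' i hi hiq]
    · exact ⟨m, le_rfl, hm, fun i hi him => absurd him hi.not_gt, hsolid⟩

theorem inColliderSectionAt_of_solid_rev (h : G.OpenRun Z s f n) (hk : k ≤ n) (hkq : k ≤ q)
    (hq : q < n) (hs : s k = .solid ∨ s k = .solidHit)
    (hund : ∀ i, k ≤ i → i < q → G.und (f i) (f (i + 1))) (hout : G.solid (f (q + 1)) (f q)) :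
    h.toRoute.inColliderSectionAt k := by
  obtain ⟨p, hpk, hund', hin⟩ := h.exists_section_start hk hs
  refine ⟨p + 1, q, ⟨Nat.le_add_left 1 p, hpk.trans hkq, hq, fun i hi hiq => ?_, hin, hout⟩,
    hpk, hkq⟩
  exact (lt_or_ge i k).elim (hund' i hi) fun hki => hund i hki hiq

theorem colliderNodeAt_or_inColliderSectionAt (h : G.OpenRun Z s f n) (hn : (s n).Passive)
    (hk : k < n) (hkZ : f k ∈ Z) :
    h.toRoute.colliderNodeAt k ∨ h.toRoute.inColliderSectionAt k := by
  have hstep := h.step k hk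
  have hne := hstep.ne_tail_of_mem hkZ
  obtain ⟨j, rfl⟩ := h.exists_eq_succ hne
  have hprev := h.step j (by omega)
  have hcollider (hc : G.colliderTriple (f j) (f (j + 1)) (f (j + 1 + 1))) :
      h.toRoute.colliderNodeAt (j + 1) := ⟨Nat.le_add_left 1 j, hk, hc⟩
  have hsection (q : ℕ) := h.inColliderSectionAt_of_solid_rev (q := q) hk.le
  unfold colliderTriple at hcollider
  cases hs : s (j + 1) with
  | tail => exact absurd hs hne
  | undirected =>
    rw [hs] at hstep hprev
    have hin := hprev.und_of_undirected
    have hout := hstep.dashed_rev_of_mem_of_undirected hkZ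
    tauto
  | dashed =>
    rw [hs] at hstep hprev
    have hin := hprev.dashed_of_dashed
    have hout := hstep.und_or_directed_rev_of_mem_of_dashed hkZ
    tauto
  | solid =>
    rw [hs] at hstep
    rcases hstep.und_or_directed_rev_of_mem_of_solid hkZ with ⟨hund, hs'⟩ | hsolid | hdashed
    · obtain ⟨q, hkq, hq, hund', hout⟩ := h.exists_section_end hn hk hs'
      refine Or.inr (hsection q (by omega) hq (.inl hs) (fun i hi hiq => ?_) hout)
      obtain rfl | hi := hi.eq_or_lt
      exacts [hund, hund' i hi hiq]
    · exact Or.inr (hsection _ le_rfl hk (.inl hs) (fun i hi hik => absurd hik hi.not_gt) hsolid)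
    · have hin := hprev.solid_or_und (.inl hs)
      tauto
  | solidHit =>
    obtain ⟨q, hkq, hq, hund, hout⟩ := h.exists_section_end hn hk.le hs
    exact Or.inr (hsection q hkq hq (.inr hs) hund hout)

section ChainGraph

variable {G : ChainGraph V}

theorem mem_of_colliderNodeAt (h : G.OpenRun Z s f n) (hc : h.toRoute.colliderNodeAt k) :
    f k ∈ Z := by
  obtain ⟨hk, hkn, hc⟩ := hc
  obtain ⟨j, rfl⟩ := Nat.exists_eq_add_of_le' hk
  change G.colliderTriple (f j) (f (j + 1)) (f (j + 1 + 1)) at hc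
  have hprev := h.step j (Nat.lt_of_succ_lt hkn)
  have hstep := h.step (j + 1) hkn
  obtain ⟨hin, hout⟩ | ⟨hin, hout⟩ : (G.dashed (f j) (f (j + 1)) ∧
      ¬ G.Directed (f (j + 1)) (f (j + 1 + 1))) ∨
      (G.fwd (f j) (f (j + 1)) ∧ G.dashed (f (j + 1 + 1)) (f (j + 1))) := by
    have hback : G.fwd (f (j + 1 + 1)) (f (j + 1)) := (colliderTriple_comm.1 hc).fwd_left
    have hfwd := hc.fwd_left
    have hdir := mt (G.not_fwd_of_directed (a := f (j + 1)) (b := f (j + 1 + 1))) (not_not.2 hback)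
    unfold colliderTriple at hc
    tauto
  · rw [hprev.eq_dashed_of_dashed hin] at hstep
    exact hstep.mem_of_dashed hout
  · exact hstep.mem_of_dashed_rev hout (hprev.ne_tail_of_fwd hin)

theorem eq_solid_or_exists_mem (h : G.OpenRun Z s f n) (hpm : p + 1 ≤ m) (hm : m ≤ n)
    (hin : G.solid (f p) (f (p + 1)))
    (hund : ∀ i, p + 1 ≤ i → i < m → G.und (f i) (f (i + 1))) :
    s m = .solid ∨ s m = .solidHit ∧ ∃ k, p + 1 ≤ k ∧ k < m ∧ f k ∈ Z := by
  induction m, hpm using Nat.le_induction with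
  | base => exact Or.inl ((h.step p hm).eq_solid_of_solid hin)
  | succ m hpm ih =>
    have hstep := h.step m hm
    have hum := hund m hpm m.lt_succ_self
    rcases ih (by omega) fun i hi him => hund i hi (by omega) with hs | ⟨hs, k, hk, hkm, hkZ⟩
    · rw [hs] at hstep
      exact (hstep.eq_solid_or_of_und hum).imp_right fun ⟨hmZ, hs'⟩ =>
        ⟨hs', m, hpm, m.lt_succ_self, hmZ⟩
    · rw [hs] at hstep
      exact Or.inr ⟨hstep.eq_solidHit_of_und hum, k, hk, by omega, hkZ⟩

theorem exists_mem_of_colliderSectionOcc (h : G.OpenRun Z s f n)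
    (hpq : h.toRoute.colliderSectionOcc p q) : ∃ k, p ≤ k ∧ k ≤ q ∧ f k ∈ Z := by
  obtain ⟨hp, hpq, hq, hund, hin, hout⟩ := hpq
  obtain ⟨p, rfl⟩ := Nat.exists_eq_add_of_le' hp
  rcases h.eq_solid_or_exists_mem hpq (Nat.le_of_succ_le hq) hin hund with hs | ⟨-, k, hk, hkq, hkZ⟩
  · have hstep := h.step q hq
    rw [hs] at hstep
    exact ⟨q, hpq, le_rfl, hstep.mem_of_solid_of_solid_rev hout⟩
  · exact ⟨k, hk, hkq.le, hkZ⟩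

theorem isZOpen (h : G.OpenRun Z s f n) (hn : (s n).Passive) (hnZ : f n ∉ Z) :
    h.toRoute.IsZOpen Z := by
  refine ⟨fun k => h.mem_of_colliderNodeAt, fun p q => h.exists_mem_of_colliderSectionOcc,
    fun k hk hcol hsec hkZ => ?_⟩
  obtain rfl | hk := Nat.eq_or_lt_of_le hk
  · exact hnZ hkZ
  · exact (h.colliderNodeAt_or_inColliderSectionAt hn hk hkZ).elim hcol hsec

end ChainGraph

end OpenRun

theorem OpenReach.notMem_of_sep {G : ChainGraph V} (h : G.OpenReach X Z a c) (hsep : G.Sep X Y Z)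
    (ha : a.Passive) (hc : c ∉ Z) : c ∉ Y := by
  obtain ⟨s, f, n, hrun, h0, rfl, rfl⟩ := h.exists_openRun
  exact fun hY => hsep ⟨hrun.toRoute, .inl ⟨h0, hY⟩, hrun.isZOpen ha hc⟩

end PreGraph

namespace PreGraph

/-- The closure of `U` under mothers of its nodes and fathers of their chain components. -/
inductive Ancestral (G : PreGraph V) (U : Finset V) : V → Prop
  | base {u} (hu : u ∈ U) : Ancestral G U u
  | mother {m w} (hw : Ancestral G U w) (h : G.dashed m w) : Ancestral G U m
  | father {f k w} (hw : Ancestral G U w) (hk : G.uconn k w) (h : G.solid f k) : Ancestral G U f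

/-- The chain component of `v` contains an ancestral node. -/
def InAncestralComponent (G : PreGraph V) (U : Finset V) (v : V) : Prop :=
  ∃ w, G.Ancestral U w ∧ G.uconn v w

/-- `v` is `i` or a mother of the ancestral node `i`. -/
def SelfOrMother (G : PreGraph V) (U : Finset V) (v i : V) : Prop :=
  v = i ∨ G.Ancestral U i ∧ G.dashed v i

/-- The pairs of nodes that can carry a nonzero entry of the precision matrix of a structural
system modified so that its marginal on the ancestral nodes is unchanged. -/
def PrecisionLink (G : PreGraph V) (U : Finset V) (v w : V) : Prop :=
  (∃ i j, G.SelfOrMother U v i ∧ (i = j ∨ G.und i j) ∧ G.SelfOrMother U w j) ∨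
  (∃ i, G.SelfOrMother U v i ∧ G.InAncestralComponent U i ∧ G.solid w i) ∨
  (∃ i, G.InAncestralComponent U i ∧ G.solid v i ∧ G.SelfOrMother U w i) ∨
  (∃ i j, G.solid v i ∧ G.uconn i j ∧ G.InAncestralComponent U j ∧ G.solid w j)

/-- Every open traversal arriving at `w ∉ Z` that is not committed to a collider section can be
replaced by one that may leave `w` as from a starting node. -/
def TurnsBack (G : PreGraph V) (X Z : Finset V) (w : V) : Prop :=
  ∀ a : Arrival, a.Passive → G.OpenReach X Z a w → w ∉ Z → G.OpenReach X Z .tail w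

/-- The nodes outside `Z` that belong to the side of `X`. -/
def NearSide (G : PreGraph V) (X Z : Finset V) (v : V) : Prop :=
  v ∉ Z ∧ (G.OpenReach X Z .tail v ∨ G.OpenReach X Z .undirected v ∨ G.OpenReach X Z .solid v)

section Turning

variable {G : PreGraph V} {X Z : Finset V} {c d f i j v w : V}

theorem OpenReach.solid_or_solidHit_of_uconn (h : G.OpenReach X Z .solid c) (hcd : G.uconn c d) :
    G.OpenReach X Z .solid d ∨ G.OpenReach X Z .solidHit d := by
  induction hcd with
  | refl => exact Or.inl h
  | @tail b d _ hbd ih =>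
    rcases ih with ih | ih
    · by_cases hb : b ∈ Z
      · exact Or.inr (ih.step (.undSolidMem hbd hb))
      · exact Or.inl (ih.step (.undSolid hbd hb))
    · exact Or.inr (ih.step (.undSolidHit hbd))

theorem OpenReach.solidHit_or_loose_of_turnsBack (h : G.OpenReach X Z .solid c)
    (hcw : G.uconn c w) (hw : G.TurnsBack X Z w) (hc : c ∉ Z) :
    G.OpenReach X Z .solidHit c ∨ ∃ a : Arrival, a.Loose ∧ G.OpenReach X Z a c := by
  induction hcw using Relation.ReflTransGen.head_induction_on with
  | refl => exact Or.inr ⟨.tail, .inl rfl, hw _ (by simp [Arrival.Passive]) h hc⟩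
  | @head c d hcd _ ih =>
    have hd := h.step (.undSolid hcd hc)
    have hdc := und_comm.1 hcd
    by_cases hdZ : d ∈ Z
    · exact Or.inl (hd.step (.undSolidMem hdc hdZ))
    · rcases ih hd hdZ with hit | ⟨a, ha, hloose⟩
      · exact Or.inl (hit.step (.undSolidHit hdc))
      · exact Or.inr ⟨.undirected, .inr rfl, hloose.step (.undLoose hdc ha hdZ)⟩

theorem OpenReach.tail_of_solid_of_turnsBack (h : G.OpenReach X Z .solid c) (hcw : G.uconn c w)
    (hw : G.TurnsBack X Z w) (hf : G.solid f c) : G.OpenReach X Z .tail f := by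
  by_cases hc : c ∈ Z
  · exact h.step (.solidInSolid hf hc)
  · rcases h.solidHit_or_loose_of_turnsBack hcw hw hc with hit | ⟨a, ha, hloose⟩
    · exact hit.step (.solidInSolidHit hf)
    · exact hloose.step (.solidInLoose hf ha hc)

theorem TurnsBack.mother (hw : G.TurnsBack X Z w) (hvw : G.dashed v w) : G.TurnsBack X Z v := by
  intro a ha h hv
  have hdash := h.step (.dashedOut hvw ha hv)
  by_cases hwZ : w ∈ Z
  · exact hdash.step (.dashedInMem hvw (by simp) (by simp [Arrival.Passive]) hwZ)
  · exact (hw _ (by simp [Arrival.Passive]) hdash hwZ).step (.dashedInTail hvw hwZ)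

theorem TurnsBack.father (hw : G.TurnsBack X Z w) (hcw : G.uconn c w) (hf : G.solid f c) :
    G.TurnsBack X Z f := fun _ ha h hfZ =>
  (h.step (.solidOut hf ha hfZ)).tail_of_solid_of_turnsBack hcw hw hf

theorem undirected_or_solid_of_und (h : G.NearSide X Z i ∨ i ∈ Z ∧ G.OpenReach X Z .dashed i)
    (hij : G.und i j) : G.OpenReach X Z .undirected j ∨ G.OpenReach X Z .solid j := by
  rcases h with ⟨hiZ, h | h | h⟩ | ⟨hiZ, h⟩
  · exact Or.inl (h.step (.undLoose hij (.inl rfl) hiZ))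
  · exact Or.inl (h.step (.undLoose hij (.inr rfl) hiZ))
  · exact Or.inr (h.step (.undSolid hij hiZ))
  · exact Or.inl (h.step (.undDashed hij hiZ))

theorem NearSide.exists_passive (h : G.NearSide X Z v) :
    ∃ a : Arrival, a.Passive ∧ G.OpenReach X Z a v := by
  rcases h.2 with h | h | h
  all_goals exact ⟨_, by simp [Arrival.Passive], h⟩

end Turning

section Separation

variable [DecidableEq V] {G : ChainGraph V} {X Y Z : Finset V} {c d f i v w : V}

theorem Ancestral.turnsBack (hw : G.Ancestral (X ∪ Y ∪ Z) w) (hsep : G.Sep X Y Z) :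
    G.TurnsBack X Z w := by
  induction hw with
  | base hu =>
    intro a ha h huZ
    rcases Finset.mem_union.1 ((Finset.mem_union.1 hu).resolve_right huZ) with hu | hu
    · exact .start hu
    · exact absurd hu (h.notMem_of_sep hsep ha huZ)
  | mother _ hmw ih => exact ih.mother hmw
  | father _ hkw hfk ih => exact ih.father hkw hfk

theorem OpenReach.tail_of_solid (h : G.OpenReach X Z .solid c) (hsep : G.Sep X Y Z)
    (hcd : G.uconn c d) (hd : G.InAncestralComponent (X ∪ Y ∪ Z) d) (hf : G.solid f d) :
    G.OpenReach X Z .tail f := by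
  obtain ⟨w, hw, hdw⟩ := hd
  rcases h.solid_or_solidHit_of_uconn hcd with hs | hit
  · exact hs.tail_of_solid_of_turnsBack hdw (hw.turnsBack hsep) hf
  · exact hit.step (.solidInSolidHit hf)

theorem NearSide.selfOrMother (h : G.NearSide X Z v) (hsep : G.Sep X Y Z)
    (hv : G.SelfOrMother (X ∪ Y ∪ Z) v c) :
    G.NearSide X Z c ∨ c ∈ Z ∧ G.OpenReach X Z .dashed c := by
  rcases hv with rfl | ⟨hc, hvc⟩
  · exact Or.inl h
  · obtain ⟨a, ha, hav⟩ := h.exists_passive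
    have hdash := hav.step (.dashedOut hvc ha h.1)
    by_cases hcZ : c ∈ Z
    · exact Or.inr ⟨hcZ, hdash⟩
    · exact Or.inl ⟨hcZ, .inl (hc.turnsBack hsep _ (by simp [Arrival.Passive]) hdash hcZ)⟩

theorem nearSide_of_selfOrMother (hw : G.SelfOrMother (X ∪ Y ∪ Z) w c) (hsep : G.Sep X Y Z)
    (hwZ : w ∉ Z) (h : G.NearSide X Z c ∨ c ∈ Z ∧ G.OpenReach X Z .dashed c ∨
      G.OpenReach X Z .undirected c ∨ G.OpenReach X Z .solid c) : G.NearSide X Z w := by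
  rcases hw with rfl | ⟨hc, hwc⟩
  · exact h.elim id fun h => ⟨hwZ, .inr (h.resolve_left fun h => hwZ h.1)⟩
  refine ⟨hwZ, .inl ?_⟩
  by_cases hcZ : c ∈ Z
  · obtain ⟨a, hpass, hne, ha⟩ : ∃ a : Arrival, a.Passive ∧ a ≠ .tail ∧ G.OpenReach X Z a c := by
      rcases h.resolve_left fun h => h.1 hcZ with ⟨-, h⟩ | h | h
      all_goals exact ⟨_, by simp [Arrival.Passive], by simp, h⟩
    exact ha.step (.dashedInMem hwc hne hpass hcZ)
  · have hnear : G.NearSide X Z c :=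
      h.elim id fun h => ⟨hcZ, .inr (h.resolve_left fun h => hcZ h.1)⟩
    obtain ⟨a, ha, hac⟩ := hnear.exists_passive
    exact (hc.turnsBack hsep a ha hac hcZ).step (.dashedInTail hwc hcZ)

theorem tail_of_solid_of_inAncestralComponent
    (h : G.NearSide X Z i ∨ i ∈ Z ∧ G.OpenReach X Z .dashed i) (hsep : G.Sep X Y Z)
    (hi : G.InAncestralComponent (X ∪ Y ∪ Z) i) (hwi : G.solid w i) : G.OpenReach X Z .tail w := by
  rcases h with ⟨hiZ, h | h | h⟩ | ⟨hiZ, h⟩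
  · exact h.step (.solidInLoose hwi (.inl rfl) hiZ)
  · exact h.step (.solidInLoose hwi (.inr rfl) hiZ)
  · exact h.tail_of_solid hsep .refl hi hwi
  · exact h.step (.solidInDashed hwi hiZ)

theorem NearSide.of_precisionLink (h : G.NearSide X Z v) (hsep : G.Sep X Y Z)
    (hvw : G.PrecisionLink (X ∪ Y ∪ Z) v w) (hwZ : w ∉ Z) : G.NearSide X Z w := by
  have hsolid {i : V} (hvi : G.solid v i) : G.OpenReach X Z .solid i := by
    obtain ⟨a, ha, hav⟩ := h.exists_passive
    exact hav.step (.solidOut hvi ha h.1)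
  rcases hvw with ⟨i, j, hi, rfl | hij, hj⟩ | ⟨i, hi, hi_anc, hwi⟩ | ⟨i, -, hvi, hw⟩ |
    ⟨i, j, hvi, hij, hj, hwj⟩
  · exact nearSide_of_selfOrMother hj hsep hwZ ((h.selfOrMother hsep hi).imp id .inl)
  · exact nearSide_of_selfOrMother hj hsep hwZ
      (.inr (.inr (undirected_or_solid_of_und (h.selfOrMother hsep hi) hij)))
  · exact ⟨hwZ, .inl
      (tail_of_solid_of_inAncestralComponent (h.selfOrMother hsep hi) hsep hi_anc hwi)⟩
  · exact nearSide_of_selfOrMother hw hsep hwZ (.inr (.inr (.inr (hsolid hvi))))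
  · exact ⟨hwZ, .inl ((hsolid hvi).tail_of_solid hsep hij hj hwj)⟩

end Separation

end PreGraph

section ModifiedSystem

variable {R : Type*} {i j : V}

/-- The matrix `B` with the rows outside `p` replaced by zero. -/
def restrictRows [Zero R] (p : V → Prop) (B : Matrix V V R) : Matrix V V R :=
  Matrix.of fun i j => if p i then B i j else 0

theorem restrictRows_apply_of_pos [Zero R] {p : V → Prop} (B : Matrix V V R) (hi : p i) :
    restrictRows p B i j = B i j :=
  if_pos hi

theorem restrictRows_apply_ne_zero [Zero R] {p : V → Prop} {B : Matrix V V R} :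
    restrictRows p B i j ≠ 0 ↔ p i ∧ B i j ≠ 0 :=
  ite_ne_right_iff

variable [Fintype V]

theorem exists_ne_zero_of_mul_apply_ne_zero [NonUnitalNonAssocSemiring R]
    {D E : Matrix V V R} (h : (D * E) i j ≠ 0) :
    ∃ k, D i k ≠ 0 ∧ E k j ≠ 0 := by
  obtain ⟨k, -, hk⟩ := Finset.exists_ne_zero_of_sum_ne_zero h
  exact ⟨k, left_ne_zero_of_mul hk, right_ne_zero_of_mul hk⟩

variable [DecidableEq V] [CommRing R] {M S : Matrix V V R}

theorem mul_row_of_row_eq_one (hi : M i = (1 : Matrix V V R) i) (D : Matrix V V R) :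
    (M * D) i = D i := by
  rw [Matrix.mul_apply_eq_vecMul, hi, ← Matrix.mul_apply_eq_vecMul, Matrix.one_mul]

theorem mul_mul_transpose_apply_of_row_eq_one (S : Matrix V V R)
    (hi : M i = (1 : Matrix V V R) i) (hj : M j = (1 : Matrix V V R) j) :
    (M * S * Mᵀ) i j = S i j := by
  rw [Matrix.mul_assoc, mul_row_of_row_eq_one hi, ← Matrix.transpose_apply (S * Mᵀ),
    Matrix.transpose_mul, Matrix.transpose_transpose, mul_row_of_row_eq_one hj,
    Matrix.transpose_apply]

theorem mul_eq_left_of_row_eq_one {D : Matrix V V R}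
    (h : ∀ i j, D i j ≠ 0 → M j = (1 : Matrix V V R) j) : D * M = D := by
  ext i j
  rw [← congrFun₂ (Matrix.mul_one D) i j, Matrix.mul_apply, Matrix.mul_apply]
  refine Finset.sum_congr rfl fun k _ => ?_
  by_cases hik : D i k = 0
  · rw [hik, zero_mul, zero_mul]
  · rw [h i k hik]

theorem transpose_mul_mul_mul_eq_one {P T : Matrix V V R}
    (h : P * (T * M * S * (T * M)ᵀ) = 1) : Tᵀ * P * T * (M * S * Mᵀ) = 1 := by
  have hT : (P * T * (M * S * Mᵀ)) * Tᵀ = 1 := by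
    simpa only [Matrix.transpose_mul, Matrix.mul_assoc] using h
  simpa only [Matrix.mul_assoc] using mul_eq_one_comm.1 hT

theorem transpose_sub_mul_mul_sub {A C P L : Matrix V V R} (hPL : P * L = 1) (hL : L.IsSymm) :
    (A - L * C)ᵀ * P * (A - L * C) =
      Aᵀ * (P * A) - Aᵀ * C - Cᵀ * A + Cᵀ * (L * C) := by
  have hLP (D : Matrix V V R) : L * (P * D) = D := by
    rw [← Matrix.mul_assoc, mul_eq_one_comm.1 hPL, Matrix.one_mul]
  have hP : P * (A - L * C) = P * A - C := by
    rw [Matrix.mul_sub, ← Matrix.mul_assoc, hPL, Matrix.one_mul]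
  rw [Matrix.mul_assoc, hP, Matrix.transpose_sub, Matrix.transpose_mul, hL.eq, Matrix.sub_mul,
    Matrix.mul_sub, Matrix.mul_sub, Matrix.mul_assoc, hLP, Matrix.mul_assoc]
  abel

theorem posDef_mul_mul_transpose {M S J : Matrix V V ℝ} (hS : S.PosDef)
    (h : J * (M * S * Mᵀ) = 1) : (M * S * Mᵀ).PosDef := by
  have hM : M * (S * Mᵀ * J) = 1 := by
    simpa only [Matrix.mul_assoc] using mul_eq_one_comm.1 h
  simpa only [Matrix.conjTranspose_eq_transpose_of_trivial] using
    hS.mul_mul_conjTranspose_same (Matrix.vecMul_injective_of_isUnit (.of_mul_eq_one _ hM))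

end ModifiedSystem

namespace PreGraph

/-- The coefficient matrix `1 - B' - L C'` of the structural equations in which the dashed edges
into non-ancestral nodes and the solid edges into components without ancestral nodes have been
deleted. -/
def ancestralFactor [Fintype V] [DecidableEq V] (G : PreGraph V) (U : Finset V)
    (B C L : Matrix V V ℝ) : Matrix V V ℝ :=
  1 - restrictRows (G.Ancestral U) B - L * restrictRows (G.InAncestralComponent U) C

/-- The coefficient matrix of the structural equations in which only the edges deleted in
`PreGraph.ancestralFactor` have been kept. -/
def complementaryFactor [Fintype V] [DecidableEq V] (G : PreGraph V) (U : Finset V)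
    (B C L : Matrix V V ℝ) : Matrix V V ℝ :=
  1 - (B - restrictRows (G.Ancestral U) B) - L * (C - restrictRows (G.InAncestralComponent U) C)

namespace IsStructural

variable [Fintype V] [DecidableEq V] {G : PreGraph V} {B C P L S : Matrix V V ℝ} {U : Finset V}
  {i j v w : V}

theorem complementaryFactor_row (h : G.IsStructural B C P L S) (hi : G.Ancestral U i) :
    G.complementaryFactor U B C L i = (1 : Matrix V V ℝ) i := by
  ext j
  have hB : (B - restrictRows (G.Ancestral U) B) i j = 0 := by
    rw [Matrix.sub_apply, restrictRows_apply_of_pos B hi, sub_self]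
  have hC : (L * (C - restrictRows (G.InAncestralComponent U) C)) i j = 0 := by
    by_contra hne
    obtain ⟨k, hik, hkj⟩ := exists_ne_zero_of_mul_apply_ne_zero hne
    have hk : G.InAncestralComponent U k := ⟨i, hi, uconn_symm (h.uconn_of_ne hik)⟩
    apply hkj
    rw [Matrix.sub_apply, restrictRows_apply_of_pos C hk, sub_self]
  rw [complementaryFactor, Matrix.sub_apply, Matrix.sub_apply, hB, hC, sub_zero, sub_zero]

theorem ancestralFactor_mul_complementaryFactor (h : G.IsStructural B C P L S) (U : Finset V) :
    G.ancestralFactor U B C L * G.complementaryFactor U B C L = 1 - (B + L * C) := by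
  have hB : restrictRows (G.Ancestral U) B * G.complementaryFactor U B C L =
      restrictRows (G.Ancestral U) B := mul_eq_left_of_row_eq_one fun i j hne => by
    obtain ⟨hi, hij⟩ := restrictRows_apply_ne_zero.1 hne
    exact h.complementaryFactor_row (.mother hi (h.dashed_of_ne hij))
  have hC : restrictRows (G.InAncestralComponent U) C * G.complementaryFactor U B C L =
      restrictRows (G.InAncestralComponent U) C := mul_eq_left_of_row_eq_one fun i j hne => by
    obtain ⟨⟨w, hw, hiw⟩, hij⟩ := restrictRows_apply_ne_zero.1 hne
    exact h.complementaryFactor_row (.father hw hiw (h.solid_of_ne hij))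
  rw [ancestralFactor, Matrix.sub_mul, Matrix.sub_mul, Matrix.one_mul, Matrix.mul_assoc, hB, hC,
    complementaryFactor, Matrix.mul_sub]
  abel

theorem ancestralPrecision_mul (h : G.IsStructural B C P L S) (U : Finset V) :
    (G.ancestralFactor U B C L)ᵀ * P * G.ancestralFactor U B C L *
      (G.complementaryFactor U B C L * S * (G.complementaryFactor U B C L)ᵀ) = 1 := by
  apply transpose_mul_mul_mul_eq_one
  rw [h.ancestralFactor_mul_complementaryFactor, ← errorCov, h.errorCov_eq, h.mul_eq_one]

theorem selfOrMother_of_ne (h : G.IsStructural B C P L S)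
    (hne : (1 - restrictRows (G.Ancestral U) B) i j ≠ 0) : G.SelfOrMother U j i := by
  refine or_iff_not_imp_left.2 fun hji => ?_
  rw [Matrix.sub_apply, Matrix.one_apply_ne (Ne.symm hji), zero_sub, neg_ne_zero] at hne
  exact (restrictRows_apply_ne_zero.1 hne).imp id h.dashed_of_ne

theorem inAncestralComponent_of_ne (h : G.IsStructural B C P L S)
    (hne : restrictRows (G.InAncestralComponent U) C i j ≠ 0) :
    G.InAncestralComponent U i ∧ G.solid j i :=
  (restrictRows_apply_ne_zero.1 hne).imp id h.solid_of_ne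

theorem precisionLink_of_ne (h : G.IsStructural B C P L S) (hS : S.IsSymm)
    (hne : ((G.ancestralFactor U B C L)ᵀ * P * G.ancestralFactor U B C L) v w ≠ 0) :
    G.PrecisionLink U v w := by
  have hL : L.IsSymm := h.errorCov_eq ▸ errorCov_isSymm hS _
  contrapose! hne
  simp only [PrecisionLink, not_or] at hne
  obtain ⟨hPlink, hAClink, hCAlink, hLlink⟩ := hne
  let A := 1 - restrictRows (G.Ancestral U) B
  let C' := restrictRows (G.InAncestralComponent U) C
  have hzero {D E : Matrix V V ℝ} (hDE : ∀ i, D i v ≠ 0 → E i w ≠ 0 → False) :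
      (Dᵀ * E) v w = 0 := by
    by_contra hne
    obtain ⟨i, hi, hiw⟩ := exists_ne_zero_of_mul_apply_ne_zero hne
    exact hDE i hi hiw
  have hAPA : (Aᵀ * (P * A)) v w = 0 := hzero fun i hi hiw => by
    obtain ⟨j, hij, hj⟩ := exists_ne_zero_of_mul_apply_ne_zero hiw
    exact hPlink ⟨i, j, h.selfOrMother_of_ne hi, h.und_of_ne hij, h.selfOrMother_of_ne hj⟩
  have hAC : (Aᵀ * C') v w = 0 := hzero fun i hi hiw =>
    hAClink ⟨i, h.selfOrMother_of_ne hi, h.inAncestralComponent_of_ne hiw⟩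
  have hCA : (C'ᵀ * A) v w = 0 := hzero fun i hi hiw =>
    hCAlink ⟨i, (h.inAncestralComponent_of_ne hi).1, (h.inAncestralComponent_of_ne hi).2,
      h.selfOrMother_of_ne hiw⟩
  have hCLC : (C'ᵀ * (L * C')) v w = 0 := hzero fun i hi hiw => by
    obtain ⟨j, hij, hj⟩ := exists_ne_zero_of_mul_apply_ne_zero hiw
    exact hLlink ⟨i, j, (h.inAncestralComponent_of_ne hi).2, h.uconn_of_ne hij,
      h.inAncestralComponent_of_ne hj⟩
  rw [ancestralFactor, transpose_sub_mul_mul_sub h.mul_eq_one hL, Matrix.add_apply,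
    Matrix.sub_apply, Matrix.sub_apply, hAPA, hAC, hCA, hCLC, sub_zero, sub_zero, add_zero]

end IsStructural

end PreGraph

namespace ChainGraph

open PreGraph

theorem globalMP_of_isStructural [Fintype V] [DecidableEq V] {G : ChainGraph V}
    {B C P L S : Matrix V V ℝ} (hS : S.PosDef) (h : G.IsStructural B C P L S) :
    G.globalMP (gaussCI S) := by
  intro X Y Z ⟨_, hXZ, _⟩ hsep
  let U := X ∪ Y ∪ Z
  let M := G.complementaryFactor U B C L
  have hprecision := h.ancestralPrecision_mul U
  have hmarginal : ∀ v ∈ Finset.univ.filter (G.Ancestral U), ∀ w ∈ Finset.univ.filter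
      (G.Ancestral U), (M * S * Mᵀ) v w = S v w := fun v hv w hw =>
    mul_mul_transpose_apply_of_row_eq_one S
      (h.complementaryFactor_row (Finset.mem_filter_univ v |>.1 hv))
      (h.complementaryFactor_row (Finset.mem_filter_univ w |>.1 hw))
  have hanc : U ⊆ Finset.univ.filter (G.Ancestral U) := fun u hu =>
    (Finset.mem_filter_univ u).2 (.base hu)
  refine (gaussCI_congr
    (Finset.subset_union_left.trans Finset.subset_union_left |>.trans hanc)
    (Finset.subset_union_right.trans Finset.subset_union_left |>.trans hanc)
    (Finset.subset_union_right.trans hanc) hmarginal).1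
    (gaussCI_of_precision_block (posDef_mul_mul_transpose hS hprecision) hprecision
      (R := Finset.univ.filter (G.NearSide X Z)) (fun x hx => ?_)
      (Finset.disjoint_left.2 fun v hv => ?_) (Finset.disjoint_left.2 fun v hv => ?_)
      fun v hv w hw hwZ => by_contra fun hne => ?_)
  · exact (Finset.mem_filter_univ x).2 ⟨Finset.disjoint_left.1 hXZ hx, .inl (.start hx)⟩
  · rw [Finset.mem_filter_univ] at hv
    obtain ⟨a, ha, hav⟩ := hv.exists_passive
    exact hav.notMem_of_sep hsep ha hv.1
  · exact ((Finset.mem_filter_univ v).1 hv).1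
  · rw [Finset.mem_filter_univ] at hv hw
    exact hw (hv.of_precisionLink hsep
      (h.precisionLink_of_ne (Matrix.isHermitian_iff_isSymm.1 hS.isHermitian) hne) hwZ)

end ChainGraph

/-- **Corollary 1.** The global, block-recursive, local and pairwise Markov properties with
respect to a UCG are all equivalent for Gaussian distributions. -/
theorem global_blockRec_local_pairwise_equivalent
    {V : Type*} [Fintype V] [DecidableEq V] (G : ChainGraph V) (hG : G.IsUCG)
    (S : Matrix V V ℝ) (hS : S.PosDef) :
    (G.toPreGraph.globalMP (gaussCI S) ↔ G.toPreGraph.blockRecMP (gaussCI S)) ∧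
    (G.toPreGraph.globalMP (gaussCI S) ↔ G.toPreGraph.localMP (gaussCI S)) ∧
    (G.toPreGraph.globalMP (gaussCI S) ↔ G.toPreGraph.pairwiseMP (gaussCI S)) := by
  have equivalence : [G.globalMP (gaussCI S), G.blockRecMP (gaussCI S), G.localMP (gaussCI S),
      G.pairwiseMP (gaussCI S)].TFAE := by
    tfae_have 1 → 3 := ChainGraph.localMP_of_globalMP
    tfae_have 3 → 2 := ChainGraph.blockRecMP_of_localMP (isLeftSemigraphoid_gaussCI hS)
    tfae_have 2 → 4 := ChainGraph.pairwiseMP_of_blockRecMP (isLeftSemigraphoid_gaussCI hS)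
    tfae_have 4 → 1 := fun hpairwise => by
      obtain ⟨B, C, P, L, hstruct⟩ := ChainGraph.exists_isStructural hG hS hpairwise
      exact ChainGraph.globalMP_of_isStructural hS hstruct
    tfae_finish
  exact ⟨equivalence.out 0 1, equivalence.out 0 2, equivalence.out 0 3⟩
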